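/- Let R be a proper representation of a graph G by piecewise-linear curves in the plane, and call a point special if it is an endpoint of a curve of R, a bend of a curve of R, or an intersection point of R. Then there exists a plane graph H, which is a subdivision of a 3-connected planar graph, drawn in the plane so that: (P1) the edges of H are drawn as vertical and horizontal segments, every internal face of H is a rectangle, and the outer face of H is disjoint from all curves of R; (P2) no curve of R passes through a vertex of H, and no edge of H passes through a special point of R; (P3) every face of H contains at most one special point of R, and no two faces containing a special point are adjacent; (P4) every edge of H is intersected at most once by the curves of R; (P5) every face of H is intersected by at most two curves of R, and if a face is intersected by two curves of R then these two curves intersect inside that face; (P6) every curve of R intersects the boundary of any single face of H at most twice. -/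

import Mathlib

/-!
The graph `H` is a fine, generic square grid in which a square block of cells around every special
point has been merged into one face.

*The grid.* Let `S` be the finite set of special points together with the break points of the given
parametrizations. Near a point of `S` every curve consists of at most two rays from that point
(`exists_star`); near any other point of the curves only one curve is visible, and it runs along a
line (`exists_regular`). Choose a coarse scale `δ` smaller than half of every positive difference of
coordinates of points of `S`, and so small that a coarse cell containing a point of `S` lies in its
star neighbourhood. Shift the coarse grid so that for every `K` the lines of the grid of width
`δ / K` avoid `S`, carry no segment of a curve, and cross in points off the curves; only countably
many values of the shift are excluded. The coarse cells containing a point of `S` are the blocks.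
The part of the curves outside the open blocks is compact and avoids `S`, so by Lebesgue's number
lemma some `K` makes each cell of width `δ / K` outside the blocks see at most one curve, along one
line that is not a grid line. All coarse cells but the blocks are divided into `K × K` fine cells
(`BlockGrid`, `exists_adapted`).

*The properties.* The faces are the fine cells, the blocks and the outside of the grid
(`BlockGrid.face_cases`), and every edge bounds a fine cell (`BlockGrid.edge_in_fine`). A line other
than a grid line meets the boundary of a rectangle at most twice, and a ray from an inner point meets
it at most once, which bounds the intersections of a curve with edges and with boundaries of faces
(`line_onRect`, `ray_onRect`). Two curves seen in the same face are seen in a block, hence cross at its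
centre, and at most two curves pass through a point. Blocks are not adjacent because their row and
column indices never differ by one (`coarse_sep`).

*Connectivity.* Suppressing the four corners of degree two yields a graph of which the grid with
blocks is a subdivision (`suppress_isSubdivisionOf`). It is 3-connected: after the removal of two
vertices, a two-colouring that is constant along edges is constant on a full rectangular grid, up to
its corners (`grid_color`), and the grid with blocks is a union of rectangular grids with large
overlaps (`BlockGrid.color`, `suppress_threeConnected`).
-/

open Set Metric

/-- A point of the plane. -/
abbrev Pt : Type := ℝ × ℝ

/-- The trace (image) of a curve parametrized over `[0,1]`. -/
def Im (γ : ℝ → Pt) : Set Pt := γ '' Icc 0 1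

/-- `γ` is affine on the interval `[s,t]`. -/
def AffOn (γ : ℝ → Pt) (s t : ℝ) : Prop :=
  ∃ a d : Pt, ∀ x ∈ Icc s t, γ x = (a.1 + x * d.1, a.2 + x * d.2)

/-- `γ` is affine on `[s,t]` with a horizontal or vertical direction. -/
def AxisAffOn (γ : ℝ → Pt) (s t : ℝ) : Prop :=
  ∃ a d : Pt, (d.1 = 0 ∨ d.2 = 0) ∧ ∀ x ∈ Icc s t, γ x = (a.1 + x * d.1, a.2 + x * d.2)

/-- `γ` restricted to `[0,1]` is a simple piecewise linear curve consisting of at most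
`n` straight segments. -/
def IsPLCurveN (n : ℕ) (γ : ℝ → Pt) : Prop :=
  InjOn γ (Icc 0 1) ∧
    ∃ t : Fin (n + 1) → ℝ, t 0 = 0 ∧ t (Fin.last n) = 1 ∧ Monotone t ∧
      ∀ i : Fin n, AffOn γ (t i.castSucc) (t i.succ)

/-- `γ` is a simple piecewise linear curve (finitely many segments). -/
def IsPLCurve (γ : ℝ → Pt) : Prop := ∃ n, IsPLCurveN n γ

/-- `γ` restricted to `[0,1]` is a simple rectilinear (axis-parallel) curve consisting of
at most `n` horizontal or vertical straight segments. -/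
def IsRectCurveN (n : ℕ) (γ : ℝ → Pt) : Prop :=
  InjOn γ (Icc 0 1) ∧
    ∃ t : Fin (n + 1) → ℝ, t 0 = 0 ∧ t (Fin.last n) = 1 ∧ Monotone t ∧
      ∀ i : Fin n, AxisAffOn γ (t i.castSucc) (t i.succ)

/-- `γ` is a simple rectilinear (axis-parallel) piecewise linear curve. -/
def IsRectCurve (γ : ℝ → Pt) : Prop := ∃ n, IsRectCurveN n γ

/-- A `k`-bend axis-parallel curve: a simple curve that is a concatenation of at most
`k+1` horizontal or vertical straight segments (hence has at most `k` bends). -/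
def IsKBendCurve (k : ℕ) (γ : ℝ → Pt) : Prop := IsRectCurveN (k + 1) γ

/-- `R` is an intersection representation of `G` by curves:
two distinct vertices are adjacent iff their curves meet. -/
def Represents {V : Type*} (G : SimpleGraph V) (R : V → ℝ → Pt) : Prop :=
  ∀ u v : V, u ≠ v → ((Im (R u) ∩ Im (R v)).Nonempty ↔ G.Adj u v)

/-- The set of intersection points of a representation: points lying on (at least)
two distinct curves. -/
def InPts {V : Type*} (R : V → ℝ → Pt) : Set Pt :=
  {p | ∃ u v : V, u ≠ v ∧ p ∈ Im (R u) ∧ p ∈ Im (R v)}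

/-- The set `B` crosses (transversally, from one side to the other) the set `A` at `p`:
in every small ball around `p` there are points of `B` off `A` that cannot be joined by a
connected subset of the ball avoiding `A`. -/
def CrossesAt (A B : Set Pt) (p : Pt) : Prop :=
  ∃ ε₀ > (0:ℝ), ∀ ε : ℝ, 0 < ε → ε ≤ ε₀ →
    ∃ x y : Pt, x ∈ (B ∩ ball p ε) \ A ∧ y ∈ (B ∩ ball p ε) \ A ∧
      ∀ C : Set Pt, C ⊆ ball p ε \ A → IsConnected C → ¬(x ∈ C ∧ y ∈ C)

/-- A proper representation: finitely many intersection points (in particular no two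
curves overlap), every intersection point lies on exactly two curves which cross
(do not touch) there, and no endpoint of a curve lies on another curve. -/
def IsProperRep {V : Type*} (R : V → ℝ → Pt) : Prop :=
  (InPts R).Finite ∧
    (∀ p : Pt, ∀ u v w : V, u ≠ v → u ≠ w → v ≠ w →
      ¬(p ∈ Im (R u) ∧ p ∈ Im (R v) ∧ p ∈ Im (R w))) ∧
    (∀ u v : V, u ≠ v → R u 0 ∉ Im (R v) ∧ R u 1 ∉ Im (R v)) ∧
    (∀ u v : V, u ≠ v → ∀ p ∈ Im (R u) ∩ Im (R v),
      CrossesAt (Im (R u)) (Im (R v)) p ∧ CrossesAt (Im (R v)) (Im (R u)) p)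

/-- Membership in the class `B_k`-VPG. -/
def InBkVPG (k : ℕ) {V : Type*} (G : SimpleGraph V) : Prop :=
  ∃ R : V → ℝ → Pt, (∀ v, IsKBendCurve k (R v)) ∧ Represents G R

/-- Membership in the class SEG of intersection graphs of straight line segments. -/
def InSEG {V : Type*} (G : SimpleGraph V) : Prop :=
  ∃ S : V → Pt × Pt, (∀ v, (S v).1 ≠ (S v).2) ∧
    ∀ u v : V, u ≠ v →
      ((segment ℝ (S u).1 (S u).2 ∩ segment ℝ (S v).1 (S v).2).Nonempty ↔ G.Adj u v)

/-- Membership in the class 3-DIR: intersection graphs of straight line segments using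
at most three distinct directions (slopes). -/
def In3DIR {V : Type*} (G : SimpleGraph V) : Prop :=
  ∃ D : Fin 3 → Pt, ∃ S : V → Pt × Pt,
    (∀ v, (S v).1 ≠ (S v).2) ∧
    (∀ v, ∃ i : Fin 3, ∃ c : ℝ, (S v).2 - (S v).1 = c • D i) ∧
    ∀ u v : V, u ≠ v →
      ((segment ℝ (S u).1 (S u).2 ∩ segment ℝ (S v).1 (S v).2).Nonempty ↔ G.Adj u v)

/-- `L` is a (straight) line in the plane. -/
def IsLine (L : Set Pt) : Prop :=
  ∃ p d : Pt, d ≠ 0 ∧ L = {x : Pt | ∃ r : ℝ, x = (p.1 + r * d.1, p.2 + r * d.2)}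

/-- `z` is a bend point of the set `S` (trace of a curve): `S` is not locally straight
at `z`, i.e. no neighbourhood of `z` in `S` is contained in a line. -/
def IsBendPt (S : Set Pt) (z : Pt) : Prop :=
  z ∈ S ∧ ∀ ε > (0:ℝ), ¬ ∃ L : Set Pt, IsLine L ∧ S ∩ ball z ε ⊆ L

/-- The special points of a representation `R`: endpoints of curves, bends of curves,
and intersection points. -/
def SpecialPts {V : Type*} (R : V → ℝ → Pt) : Set Pt :=
  {z | (∃ v, z = R v 0 ∨ z = R v 1) ∨ (∃ v, IsBendPt (Im (R v)) z) ∨ z ∈ InPts R}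

/-- A plane graph drawn with horizontal and vertical straight-line edges:
edges may meet only at common endpoints, and no vertex lies in the interior
of an edge. -/
structure GridPlaneGraph where
  verts : Finset Pt
  edges : Finset (Pt × Pt)
  ends_mem : ∀ e ∈ edges, e.1 ∈ verts ∧ e.2 ∈ verts
  nondeg : ∀ e ∈ edges, e.1 ≠ e.2
  axisAligned : ∀ e ∈ edges, e.1.1 = e.2.1 ∨ e.1.2 = e.2.2
  meet_at_ends : ∀ e ∈ edges, ∀ f ∈ edges, e ≠ f → (e.1, e.2) ≠ (f.2, f.1) →
    ∀ x : Pt, x ∈ segment ℝ e.1 e.2 → x ∈ segment ℝ f.1 f.2 →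
      (x = e.1 ∨ x = e.2) ∧ (x = f.1 ∨ x = f.2)
  no_vertex_interior : ∀ e ∈ edges, ∀ v ∈ verts, v ∈ segment ℝ e.1 e.2 → v = e.1 ∨ v = e.2

/-- The drawing of a plane graph: the union of its (closed) edge segments. -/
def GridPlaneGraph.drawing (H : GridPlaneGraph) : Set Pt :=
  ⋃ e ∈ H.edges, segment ℝ e.1 e.2

/-- The faces of a plane graph: connected components of the complement of the drawing. -/
def GridPlaneGraph.IsFace (H : GridPlaneGraph) (F : Set Pt) : Prop :=
  ∃ x ∉ H.drawing, F = connectedComponentIn H.drawingᶜ x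

/-- The abstract graph underlying a plane graph. -/
def GridPlaneGraph.graph (H : GridPlaneGraph) : SimpleGraph {p : Pt // p ∈ H.verts} :=
  SimpleGraph.fromRel (fun a b => ((a : Pt), (b : Pt)) ∈ H.edges)

/-- `H` is a subdivision of `G₀`: the branch vertices are embedded by `φ`, each edge
of `G₀` is replaced by a path of `H`, distinct edge-paths are internally disjoint, and
together these paths cover all vertices and edges of `H`. -/
def IsSubdivisionOf {W U : Type*} (H : SimpleGraph W) (G₀ : SimpleGraph U) : Prop :=
  ∃ φ : U ↪ W, ∃ P : ∀ ⦃u v : U⦄, G₀.Adj u v → H.Walk (φ u) (φ v),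
    (∀ ⦃u v : U⦄ (h : G₀.Adj u v), (P h).IsPath) ∧
    (∀ ⦃u v : U⦄ (h : G₀.Adj u v), ∀ w ∈ (P h).support,
        w ∈ Set.range φ → w = φ u ∨ w = φ v) ∧
    (∀ ⦃u v : U⦄ (h : G₀.Adj u v) ⦃u' v' : U⦄ (h' : G₀.Adj u' v'),
        s(u, v) ≠ s(u', v') → ∀ w, w ∈ (P h).support → w ∈ (P h').support →
          w ∈ Set.range φ) ∧
    (∀ e ∈ H.edgeSet, ∃ u v : U, ∃ h : G₀.Adj u v, e ∈ (P h).edges) ∧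
    (∀ w : W, w ∈ Set.range φ ∨ ∃ u v : U, ∃ h : G₀.Adj u v, w ∈ (P h).support)

/-- A 3-connected graph: at least 4 vertices, and deleting any set of at most 2
vertices leaves a connected graph. -/
def ThreeConnected {U : Type*} (G : SimpleGraph U) : Prop :=
  4 ≤ Nat.card U ∧ ∀ S : Set U, S.ncard ≤ 2 → (G.induce Sᶜ).Connected

/-! ### Suppressing vertices of degree two -/

/-- The graph obtained from `H` by suppressing the vertices of `D`: two remaining vertices are
adjacent if they are adjacent in `H` or have a common neighbour in `D`. -/
def suppress {W : Type*} (H : SimpleGraph W) (D : Set W) : SimpleGraph {w : W // w ∉ D} where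
  Adj u v := u ≠ v ∧ (H.Adj u v ∨ ∃ c ∈ D, H.Adj c u ∧ H.Adj c v)
  symm := ⟨fun u v h => ⟨h.1.symm, h.2.elim (fun h => Or.inl h.symm)
    (fun ⟨c, hc, h1, h2⟩ => Or.inr ⟨c, hc, h2, h1⟩)⟩⟩
  loopless := ⟨fun u h => h.1 rfl⟩

theorem suppress_isSubdivisionOf {W : Type*} (H : SimpleGraph W) (D : Set W)
    (h1 : ∀ c ∈ D, ∀ w, H.Adj c w → w ∉ D)
    (h2 : ∀ c ∈ D, ∀ u v, H.Adj c u → H.Adj c v → ¬ H.Adj u v)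
    (h3 : ∀ c ∈ D, ∀ u v w, H.Adj c u → H.Adj c v → H.Adj c w → u = v ∨ u = w ∨ v = w)
    (h3' : ∀ c ∈ D, ∃ u v, u ≠ v ∧ H.Adj c u ∧ H.Adj c v)
    (h4 : ∀ c ∈ D, ∀ c' ∈ D, ∀ u v, u ≠ v → H.Adj c u → H.Adj c v → H.Adj c' u →
      H.Adj c' v → c = c') :
    IsSubdivisionOf H (suppress H D) := by
  classical
  have key : ∀ u v : {w : W // w ∉ D}, (suppress H D).Adj u v →
      ∃ p : H.Walk (u : W) (v : W), p.IsPath ∧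
        ((H.Adj u v ∧ p.support = [(u : W), (v : W)] ∧ p.edges = [s((u : W), (v : W))]) ∨
        (¬ H.Adj u v ∧ ∃ c ∈ D, H.Adj c u ∧ H.Adj c v ∧ p.support = [(u : W), c, (v : W)] ∧
          p.edges = [s((u : W), c), s(c, (v : W))])) := by
    intro u v h
    have huv : (u : W) ≠ v := fun e => h.1 (Subtype.ext e)
    by_cases ha : H.Adj u v
    · refine ⟨.cons ha .nil, ?_, Or.inl ⟨ha, by simp, by simp⟩⟩
      rw [SimpleGraph.Walk.isPath_def]; simpa using huv
    · obtain ⟨c, hc, hu, hv⟩ := h.2.resolve_left ha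
      refine ⟨.cons hu.symm (.cons hv .nil), ?_, Or.inr ⟨ha, c, hc, hu, hv, by simp, by simp⟩⟩
      rw [SimpleGraph.Walk.isPath_def]
      simp [huv, hu.ne', hv.ne]
  choose P hP hP' using key
  refine ⟨⟨Subtype.val, Subtype.val_injective⟩, fun u v h => P u v h, fun u v h => hP u v h,
    ?_, ?_, ?_, ?_⟩
  · rintro u v h w hw ⟨w, rfl⟩
    rcases hP' u v h with ⟨_, hs, _⟩ | ⟨_, c, hc, _, _, hs, _⟩
    · simpa [hs] using hw
    · have hwc : (w : W) ≠ c := fun e => w.2 (e ▸ hc)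
      simpa [hs, hwc] using hw
  · intro u v h u' v' h' hne w hw hw'
    by_contra hr
    have hwD : w ∈ D := by
      by_contra hD
      exact hr ⟨⟨w, hD⟩, rfl⟩
    have inner : ∀ (u v : {w : W // w ∉ D}) (h : (suppress H D).Adj u v),
        w ∈ (P u v h).support → H.Adj w u ∧ H.Adj w v := by
      intro u v h hw
      have hu : w ≠ u := fun e => u.2 (e ▸ hwD)
      have hv : w ≠ v := fun e => v.2 (e ▸ hwD)
      rcases hP' u v h with ⟨_, hs, _⟩ | ⟨_, c, hc, hcu, hcv, hs, _⟩
      · simp [hs, hu, hv] at hw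
      · have : w = c := by simpa [hs, hu, hv] using hw
        subst this
        exact ⟨hcu, hcv⟩
    obtain ⟨a1, a2⟩ := inner u v h hw
    obtain ⟨b1, b2⟩ := inner u' v' h' hw'
    apply hne
    have e1 := h3 w hwD u v u' a1 a2 b1
    have e2 := h3 w hwD u v v' a1 a2 b2
    have huv := h.1
    have huv' := h'.1
    simp only [Subtype.val_inj] at e1 e2
    rw [Sym2.eq_iff]
    clear * - e1 e2 huv huv'
    rcases e1 with e1 | e1 | e1
    · exact (huv e1).elim
    · rcases e2 with e2 | e2 | e2
      · exact (huv e2).elim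
      · exact (huv' (e1.symm.trans e2)).elim
      · exact Or.inl ⟨e1, e2⟩
    · rcases e2 with e2 | e2 | e2
      · exact (huv e2).elim
      · exact Or.inr ⟨e2, e1⟩
      · exact (huv' (e1.symm.trans e2)).elim
  · intro e he
    induction e using Sym2.ind with
    | _ x y =>
    rw [SimpleGraph.mem_edgeSet] at he
    have main : ∀ x y, H.Adj x y → x ∈ D →
        ∃ u v : {w : W // w ∉ D}, ∃ h : (suppress H D).Adj u v, s(x, y) ∈ (P u v h).edges := by
      intro x y he hx
      obtain ⟨z, hzy, hz⟩ : ∃ z, z ≠ y ∧ H.Adj x z := by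
        obtain ⟨u, v, huv, hu, hv⟩ := h3' x hx
        by_cases e : u = y
        · exact ⟨v, fun e' => huv (e.trans e'.symm), hv⟩
        · exact ⟨u, e, hu⟩
      have h : (suppress H D).Adj ⟨y, h1 x hx y he⟩ ⟨z, h1 x hx z hz⟩ :=
        ⟨fun e => hzy (Subtype.ext_iff.1 e).symm, Or.inr ⟨x, hx, he, hz⟩⟩
      refine ⟨_, _, h, ?_⟩
      rcases hP' _ _ h with ⟨hh, _, _⟩ | ⟨_, c, hc, hcu, hcv, _, hs⟩
      · exact (h2 x hx y z he hz hh).elim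
      · have : c = x := h4 c hc x hx y z hzy.symm hcu hcv he hz
        subst this
        rw [hs]
        simp [Sym2.eq_swap]
    by_cases hx : x ∈ D
    · exact main x y he hx
    · by_cases hy : y ∈ D
      · rw [Sym2.eq_swap]
        exact main y x he.symm hy
      · have h : (suppress H D).Adj ⟨x, hx⟩ ⟨y, hy⟩ :=
          ⟨fun e => he.ne (Subtype.ext_iff.1 e), Or.inl he⟩
        refine ⟨_, _, h, ?_⟩
        rcases hP' _ _ h with ⟨_, _, hs⟩ | ⟨hh, _⟩
        · simp [hs]
        · exact (hh he).elim
  · intro w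
    by_cases hw : w ∈ D
    · right
      obtain ⟨u, v, huv, hu, hv⟩ := h3' w hw
      have h : (suppress H D).Adj ⟨u, h1 w hw u hu⟩ ⟨v, h1 w hw v hv⟩ :=
        ⟨fun e => huv (Subtype.ext_iff.1 e), Or.inr ⟨w, hw, hu, hv⟩⟩
      refine ⟨_, _, h, ?_⟩
      rcases hP' _ _ h with ⟨hh, _, _⟩ | ⟨_, c, hc, hcu, hcv, hs, _⟩
      · exact (h2 w hw u v hu hv hh).elim
      · have : c = w := h4 c hc w hw u v huv hcu hcv hu hv
        subst this
        simp [hs]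
    · exact Or.inl ⟨⟨w, hw⟩, rfl⟩

/-- A criterion for 3-connectedness of a suppressed graph that avoids walks: after the removal of
at most two vertices, every two-colouring that is constant along edges is constant on the
vertices that are not suppressed. -/
theorem suppress_threeConnected {W : Type*} [Finite W] (H : SimpleGraph W) (D : Set W)
    (hcard : 4 ≤ Nat.card {w : W // w ∉ D})
    (hDD : ∀ u ∈ D, ∀ v, H.Adj u v → v ∉ D)
    (hcol : ∀ S : Set W, S.ncard ≤ 2 → ∀ g : W → Prop,
      (∀ u v, u ∉ S → v ∉ S → H.Adj u v → (g u ↔ g v)) →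
      ∀ u v, u ∉ S → v ∉ S → u ∉ D → v ∉ D → (g u ↔ g v)) :
    ThreeConnected (suppress H D) := by
  classical
  refine ⟨hcard, fun S hS => ?_⟩
  have hne : Nonempty (Sᶜ : Set {w : W // w ∉ D}) := by
    by_contra h
    have hall : S = Set.univ := by
      ext x
      by_contra hx
      exact h ⟨⟨x, by simpa using hx⟩⟩
    rw [hall, Set.ncard_univ] at hS
    omega
  rw [SimpleGraph.connected_iff]
  refine ⟨fun x y => ?_, hne⟩
  -- The colour of a vertex records whether it is reachable from `x`.
  set Γ := (suppress H D).induce Sᶜ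
  let f : {w : W // w ∉ D} → Prop := fun w => ∃ h : w ∈ Sᶜ, Γ.Reachable x ⟨w, h⟩
  have hf : ∀ u v, u ∉ S → v ∉ S → (suppress H D).Adj u v → f u → f v := by
    rintro u v hu hv huv ⟨_, h⟩
    refine ⟨hv, h.trans (SimpleGraph.Adj.reachable ?_)⟩
    simpa [Γ] using huv
  let S' : Set W := Subtype.val '' S
  have hS' : S'.ncard ≤ 2 := by
    rw [Set.ncard_image_of_injective _ Subtype.val_injective]; exact hS
  have hmem : ∀ u (hu : u ∉ D), u ∉ S' → (⟨u, hu⟩ : {w : W // w ∉ D}) ∉ S :=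
    fun u hu h h' => h ⟨_, h', rfl⟩
  let g : W → Prop := fun w =>
    if hw : w ∈ D then ∃ u, ∃ hu : u ∉ D, u ∉ S' ∧ H.Adj w u ∧ f ⟨u, hu⟩ else f ⟨w, hw⟩
  have hg : ∀ u v, u ∉ S' → v ∉ S' → H.Adj u v → g u → g v := by
    intro u v hu hv huv hgu
    by_cases huD : u ∈ D
    · have hvD := hDD u huD v huv
      simp only [g, huD, hvD, dif_pos, dif_neg, not_false_eq_true] at hgu ⊢
      obtain ⟨w, hwD, hw, huw, hfw⟩ := hgu
      by_cases e : w = v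
      · subst e; exact hfw
      · exact hf _ _ (hmem _ _ hw) (hmem _ _ hv)
          ⟨fun e' => e (Subtype.ext_iff.1 e'), Or.inr ⟨u, huD, huw, huv⟩⟩ hfw
    · by_cases hvD : v ∈ D
      · simp only [g, huD, hvD, dif_pos, dif_neg, not_false_eq_true] at hgu ⊢
        exact ⟨u, huD, hu, huv.symm, hgu⟩
      · simp only [g, huD, hvD, dif_neg, not_false_eq_true] at hgu ⊢
        exact hf _ _ (hmem _ _ hu) (hmem _ _ hv)
          ⟨fun e' => huv.ne (Subtype.ext_iff.1 e'), Or.inl huv⟩ hgu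
  have hxS : (x : {w : W // w ∉ D}).1 ∉ S' := by
    rintro ⟨z, hz, e⟩
    exact x.2 (Subtype.ext e ▸ hz)
  have hyS : (y : {w : W // w ∉ D}).1 ∉ S' := by
    rintro ⟨z, hz, e⟩
    exact y.2 (Subtype.ext e ▸ hz)
  have := (hcol S' hS' g (fun u v hu hv h => ⟨hg u v hu hv h, hg v u hv hu h.symm⟩)
    x.1 y.1 hxS hyS x.1.2 y.1.2).1
  simp only [g, x.1.2, y.1.2, dif_neg, not_false_eq_true] at this
  obtain ⟨_, h⟩ := this ⟨x.2, SimpleGraph.Reachable.refl _⟩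
  exact h

/-- Both properties only depend on the isomorphism type of the graph, so a finite vertex set may be
replaced by `Fin N`. -/
theorem exists_fin_graph {W U : Type*} [Finite U] (H : SimpleGraph W) (G : SimpleGraph U)
    (hG : ThreeConnected G) (hs : IsSubdivisionOf H G) :
    ∃ (N : ℕ) (G₀ : SimpleGraph (Fin N)), ThreeConnected G₀ ∧ IsSubdivisionOf H G₀ := by
  classical
  obtain ⟨N, ⟨e⟩⟩ := Finite.exists_equiv_fin U
  refine ⟨N, G.comap e.symm, ⟨?_, fun S hS => ?_⟩, ?_⟩
  · rw [← Nat.card_congr e]; exact hG.1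
  · have h := hG.2 (e.symm '' S) (by rwa [Set.ncard_image_of_injective _ e.symm.injective])
    rw [SimpleGraph.connected_iff] at h ⊢
    let ψ : G.induce (e.symm '' S)ᶜ →g (G.comap e.symm).induce Sᶜ :=
      { toFun := fun x => ⟨e x, fun hx => x.2 ⟨e x, hx, by simp⟩⟩
        map_rel' := by
          intro a b hab
          simpa using hab }
    have hψ : Function.Surjective ψ := by
      rintro ⟨x, hx⟩
      refine ⟨⟨e.symm x, ?_⟩, ?_⟩
      · rintro ⟨z, hz, h⟩
        exact hx (e.symm.injective h ▸ hz)
      · exact Subtype.ext (e.apply_symm_apply x)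
    refine ⟨fun x y => ?_, ?_⟩
    · obtain ⟨x, rfl⟩ := hψ x
      obtain ⟨y, rfl⟩ := hψ y
      exact (h.1 x y).map ψ
    · obtain ⟨x⟩ := h.2
      exact ⟨ψ x⟩
  · obtain ⟨φ, P, p1, p2, p3, p4, p5⟩ := hs
    have hr : Set.range (fun u => φ (e.symm u)) = Set.range φ := by
      ext w
      constructor
      · rintro ⟨u, rfl⟩; exact ⟨_, rfl⟩
      · rintro ⟨u, rfl⟩; exact ⟨e u, by simp⟩
    have lift : ∀ u v : U, ∀ h : G.Adj u v, ∀ q : (∀ x y, H.Walk x y → Prop), q _ _ (P h) →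
        ∃ u' v' : Fin N, ∃ h' : G.Adj (e.symm u') (e.symm v'), q _ _ (P h') := by
      intro u v h q hq
      obtain ⟨u', rfl⟩ := e.symm.surjective u
      obtain ⟨v', rfl⟩ := e.symm.surjective v
      exact ⟨u', v', h, hq⟩
    refine ⟨e.symm.toEmbedding.trans φ, fun u v h => P (u := e.symm u) (v := e.symm v) h,
      ?_, ?_, ?_, ?_, ?_⟩
    · intro u v h; exact p1 _
    · intro u v h w hw hw'
      exact p2 (u := e.symm u) (v := e.symm v) h w hw (hr ▸ hw')
    · intro u v h u' v' h' hne w hw hw'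
      have hne' : s(e.symm u, e.symm v) ≠ s(e.symm u', e.symm v') := by
        intro he
        apply hne
        have := congrArg (Sym2.map e) he
        simpa using this
      have := p3 (u := e.symm u) (v := e.symm v) h (u' := e.symm u') (v' := e.symm v') h'
        hne' w hw hw'
      rw [← hr] at this
      exact this
    · intro x hx
      obtain ⟨u, v, h, hh⟩ := p4 x hx
      exact lift u v h (fun _ _ p => x ∈ p.edges) hh
    · intro w
      rcases p5 w with hw | ⟨u, v, h, hh⟩
      · left
        rw [← hr] at hw
        exact hw
      · exact Or.inr (lift u v h (fun _ _ p => w ∈ p.support) hh)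

/-! ### Colourings of grids with two vertices removed -/

/-- In a rectangular grid with at least three rows and three columns, after the removal of two
vertices `s` and `t`, a colouring that is constant along edges is constant, corners excepted:
a corner may be cut off by its two neighbours. Some row and some column avoid `s` and `t`, and all
other vertices are joined to these. -/
theorem grid_color (a a' b b' : ℕ) (ha : a + 2 ≤ a') (hb : b + 2 ≤ b') (s t : ℕ × ℕ)
    (g : ℕ → ℕ → Prop)
    (hH : ∀ i j, a ≤ i → i < a' → b ≤ j → j ≤ b' → (i, j) ≠ s → (i, j) ≠ t →
      (i + 1, j) ≠ s → (i + 1, j) ≠ t → (g i j ↔ g (i + 1) j))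
    (hV : ∀ i j, a ≤ i → i ≤ a' → b ≤ j → j < b' → (i, j) ≠ s → (i, j) ≠ t →
      (i, j + 1) ≠ s → (i, j + 1) ≠ t → (g i j ↔ g i (j + 1))) :
    ∃ κ : Prop, ∀ i j, a ≤ i → i ≤ a' → b ≤ j → j ≤ b' → (i, j) ≠ s → (i, j) ≠ t →
      ¬ ((i = a ∨ i = a') ∧ (j = b ∨ j = b')) → (g i j ↔ κ) := by
  obtain ⟨s1, s2⟩ := s
  obtain ⟨t1, t2⟩ := t
  simp only [ne_eq, Prod.mk.injEq] at *
  have row : ∀ j, b ≤ j → j ≤ b' → j ≠ s2 → j ≠ t2 → ∀ k, a + k ≤ a' →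
      (g a j ↔ g (a + k) j) := by
    intro j h1 h2 h3 h4 k
    induction k with
    | zero => intro _; rfl
    | succ k ih =>
      intro hk
      exact (ih (by omega)).trans (hH (a + k) j (by omega) (by omega) h1 h2 (by tauto) (by tauto)
        (by tauto) (by tauto))
  have col : ∀ i, a ≤ i → i ≤ a' → i ≠ s1 → i ≠ t1 → ∀ k, b + k ≤ b' →
      (g i b ↔ g i (b + k)) := by
    intro i h1 h2 h3 h4 k
    induction k with
    | zero => intro _; rfl
    | succ k ih =>
      intro hk
      exact (ih (by omega)).trans (hV i (b + k) h1 h2 (by omega) (by omega) (by tauto) (by tauto)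
        (by tauto) (by tauto))
  have row' : ∀ j, b ≤ j → j ≤ b' → j ≠ s2 → j ≠ t2 → ∀ i i', a ≤ i → i ≤ a' → a ≤ i' →
      i' ≤ a' → (g i j ↔ g i' j) := by
    intro j h1 h2 h3 h4 i i' hi hi1 hi' hi1'
    obtain ⟨k, rfl⟩ := Nat.exists_eq_add_of_le hi
    obtain ⟨k', rfl⟩ := Nat.exists_eq_add_of_le hi'
    exact (row j h1 h2 h3 h4 k hi1).symm.trans (row j h1 h2 h3 h4 k' hi1')
  have col' : ∀ i, a ≤ i → i ≤ a' → i ≠ s1 → i ≠ t1 → ∀ j j', b ≤ j → j ≤ b' → b ≤ j' →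
      j' ≤ b' → (g i j ↔ g i j') := by
    intro i h1 h2 h3 h4 j j' hj hj1 hj' hj1'
    obtain ⟨k, rfl⟩ := Nat.exists_eq_add_of_le hj
    obtain ⟨k', rfl⟩ := Nat.exists_eq_add_of_le hj'
    exact (col i h1 h2 h3 h4 k hj1).symm.trans (col i h1 h2 h3 h4 k' hj1')
  obtain ⟨c, hc1, hc2, hc3, hc4⟩ : ∃ c, a ≤ c ∧ c ≤ a' ∧ c ≠ s1 ∧ c ≠ t1 := by
    by_cases h0 : a ≠ s1 ∧ a ≠ t1
    · exact ⟨a, by omega⟩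
    · by_cases h1 : a + 1 ≠ s1 ∧ a + 1 ≠ t1
      · exact ⟨a + 1, by omega⟩
      · exact ⟨a + 2, by omega⟩
  obtain ⟨r, hr1, hr2, hr3, hr4⟩ : ∃ c, b ≤ c ∧ c ≤ b' ∧ c ≠ s2 ∧ c ≠ t2 := by
    by_cases h0 : b ≠ s2 ∧ b ≠ t2
    · exact ⟨b, by omega⟩
    · by_cases h1 : b + 1 ≠ s2 ∧ b + 1 ≠ t2
      · exact ⟨b + 1, by omega⟩
      · exact ⟨b + 2, by omega⟩
  have rowfree : ∀ i j, a ≤ i → i ≤ a' → b ≤ j → j ≤ b' → j ≠ s2 → j ≠ t2 → (g i j ↔ g c r) := by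
    intro i j h1 h2 h3 h4 h5 h6
    exact (row' j h3 h4 h5 h6 i c h1 h2 hc1 hc2).trans (col' c hc1 hc2 hc3 hc4 j r h3 h4 hr1 hr2)
  have colfree : ∀ i j, a ≤ i → i ≤ a' → b ≤ j → j ≤ b' → i ≠ s1 → i ≠ t1 → (g i j ↔ g c r) := by
    intro i j h1 h2 h3 h4 h5 h6
    exact (col' i h1 h2 h5 h6 j r h3 h4 hr1 hr2).trans (row' r hr1 hr2 hr3 hr4 i c h1 h2 hc1 hc2)
  refine ⟨g c r, fun i j h1 h2 h3 h4 h5 h6 h7 => ?_⟩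
  by_cases hr : j ≠ s2 ∧ j ≠ t2
  · exact rowfree i j h1 h2 h3 h4 hr.1 hr.2
  by_cases hc : i ≠ s1 ∧ i ≠ t1
  · exact colfree i j h1 h2 h3 h4 hc.1 hc.2
  -- One removed vertex lies in the row of `(i, j)`, the other one in its column: some neighbour
  -- of `(i, j)` lies in a row or a column that avoids both.
  by_cases e1 : i + 1 ≤ a' ∧ i + 1 ≠ s1 ∧ i + 1 ≠ t1
  · exact (hH i j h1 (by omega) h3 h4 h5 h6 (by omega) (by omega)).trans
      (colfree (i + 1) j (by omega) e1.1 h3 h4 e1.2.1 e1.2.2)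
  by_cases e2 : a + 1 ≤ i ∧ i - 1 ≠ s1 ∧ i - 1 ≠ t1
  · have := hH (i - 1) j (by omega) (by omega) h3 h4 (by omega) (by omega) (by omega) (by omega)
    rw [show i - 1 + 1 = i by omega] at this
    exact this.symm.trans (colfree (i - 1) j (by omega) (by omega) h3 h4 e2.2.1 e2.2.2)
  by_cases e3 : j + 1 ≤ b' ∧ j + 1 ≠ s2 ∧ j + 1 ≠ t2
  · exact (hV i j h1 h2 h3 (by omega) h5 h6 (by omega) (by omega)).trans
      (rowfree i (j + 1) h1 h2 (by omega) e3.1 e3.2.1 e3.2.2)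
  by_cases e4 : b + 1 ≤ j ∧ j - 1 ≠ s2 ∧ j - 1 ≠ t2
  · have := hV i (j - 1) h1 h2 (by omega) (by omega) (by omega) (by omega) (by omega) (by omega)
    rw [show j - 1 + 1 = j by omega] at this
    exact this.symm.trans (rowfree i (j - 1) h1 h2 (by omega) (by omega) e4.2.1 e4.2.2)
  omega

/-! ### Grids with blocks -/

/-- The data of an `n × n` grid of coarse cells, each consisting of `K × K` fine cells. The
vertical and horizontal lines of the fine grid have the coordinates `X i` and `Y j`,
`0 ≤ i, j ≤ n * K`. The coarse cells in `B` are the *blocks*: they are left undivided.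
No block lies at the boundary of the grid, and neither the columns nor the rows of two blocks are
consecutive. -/
structure BlockGrid where
  X : ℕ → ℝ
  Y : ℕ → ℝ
  hX : StrictMono X
  hY : StrictMono Y
  K : ℕ
  n : ℕ
  B : Set (ℕ × ℕ)
  hK : 4 ≤ K
  hn : 2 ≤ n
  hB : ∀ p ∈ B, 1 ≤ p.1 ∧ p.1 + 2 ≤ n ∧ 1 ≤ p.2 ∧ p.2 + 2 ≤ n
  sep1 : ∀ p ∈ B, ∀ q ∈ B, q.1 ≠ p.1 + 1
  sep2 : ∀ p ∈ B, ∀ q ∈ B, q.2 ≠ p.2 + 1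

namespace BlockGrid

variable (D : BlockGrid)

/-- The number of fine columns (and of fine rows). -/
def N : ℕ := D.n * D.K

/-- A grid point strictly inside a block; such points are not vertices. -/
def Hole (i j : ℕ) : Prop := (i / D.K, j / D.K) ∈ D.B ∧ i % D.K ≠ 0 ∧ j % D.K ≠ 0

theorem div_of_between {K a i : ℕ} (h1 : a * K < i) (h2 : i < (a + 1) * K) :
    i / K = a ∧ i % K ≠ 0 := by
  have hd : i / K = a := Nat.div_eq_of_lt_le h1.le h2
  refine ⟨hd, fun h => ?_⟩
  have := Nat.div_add_mod i K
  rw [hd, h, mul_comm] at this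
  omega

theorem div_bounds {K : ℕ} (hK : 0 < K) (i : ℕ) : i / K * K ≤ i ∧ i < (i / K + 1) * K := by
  have h1 := Nat.div_add_mod i K
  have h2 := Nat.mod_lt i hK
  rw [mul_comm] at h1
  rw [add_mul]
  omega

theorem div_bounds_lt {K : ℕ} {i : ℕ} (h : i % K ≠ 0) : i / K * K < i := by
  have h1 := Nat.div_add_mod i K
  rw [mul_comm] at h1
  omega

theorem hK0 : 0 < D.K := by have := D.hK; omega

theorem coarse_le {a : ℕ} (h : a + 1 ≤ D.n) : a * D.K + D.K ≤ D.N := by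
  have := Nat.mul_le_mul_right D.K h
  rw [add_mul] at this
  unfold N
  omega

theorem N_ge : 8 ≤ D.N := by
  have := Nat.mul_le_mul D.hn D.hK
  unfold N
  omega

/-- After the removal of two vertices `s` and `t`, a colouring of the grid points outside the
blocks that is constant along edges is constant on all points but the four outer corners:
`grid_color` applies to all columns and rows of coarse cells that contain no block, to single
coarse cells, and any two of these grids that overlap share three vertices. -/
theorem color (s t : ℕ × ℕ) (g : ℕ → ℕ → Prop)
    (hH : ∀ i j, i < D.N → j ≤ D.N → ¬ D.Hole i j → ¬ D.Hole (i + 1) j → (i, j) ≠ s →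
      (i, j) ≠ t → (i + 1, j) ≠ s → (i + 1, j) ≠ t → (g i j ↔ g (i + 1) j))
    (hV : ∀ i j, i ≤ D.N → j < D.N → ¬ D.Hole i j → ¬ D.Hole i (j + 1) → (i, j) ≠ s →
      (i, j) ≠ t → (i, j + 1) ≠ s → (i, j + 1) ≠ t → (g i j ↔ g i (j + 1))) :
    ∃ κ : Prop, ∀ i j, i ≤ D.N → j ≤ D.N → ¬ D.Hole i j → (i, j) ≠ s → (i, j) ≠ t →
      ¬ ((i = 0 ∨ i = D.N) ∧ (j = 0 ∨ j = D.N)) → (g i j ↔ κ) := by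
  have hK := D.hK
  have hN := D.N_ge
  have hn := D.hn
  have rect : ∀ a a' b b', a + 2 ≤ a' → b + 2 ≤ b' → a' ≤ D.N → b' ≤ D.N →
      (∀ i j, a ≤ i → i ≤ a' → b ≤ j → j ≤ b' → ¬ D.Hole i j) →
      ∃ κ : Prop, ∀ i j, a ≤ i → i ≤ a' → b ≤ j → j ≤ b' → (i, j) ≠ s → (i, j) ≠ t →
      ¬ ((i = a ∨ i = a') ∧ (j = b ∨ j = b')) → (g i j ↔ κ) := by
    intro a a' b b' ha hb ha' hb' hh
    refine grid_color a a' b b' ha hb s t g ?_ ?_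
    · intro i j h1 h2 h3 h4
      exact hH i j (by omega) (by omega) (hh i j h1 (by omega) h3 h4)
        (hh (i + 1) j (by omega) (by omega) h3 h4)
    · intro i j h1 h2 h3 h4
      exact hV i j (by omega) (by omega) (hh i j h1 h2 h3 (by omega))
        (hh i (j + 1) h1 h2 (by omega) (by omega))
  have divs : ∀ a i, a * D.K ≤ i → i ≤ a * D.K + D.K → i % D.K ≠ 0 → i / D.K = a := by
    intro a i h1 h2 h3
    refine (div_of_between (K := D.K) (a := a) (i := i) ?_ ?_).1
    · rcases h1.lt_or_eq with h | h
      · exact h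
      · simp [← h] at h3
    · rcases h2.lt_or_eq with h | h
      · rw [add_mul]; omega
      · simp [h] at h3
  have cols : ∀ a, a + 1 ≤ D.n → (∀ b, (a, b) ∉ D.B) →
      ∃ κ : Prop, ∀ i j, a * D.K ≤ i → i ≤ a * D.K + D.K → 0 ≤ j → j ≤ D.N → (i, j) ≠ s →
      (i, j) ≠ t → ¬ ((i = a * D.K ∨ i = a * D.K + D.K) ∧ (j = 0 ∨ j = D.N)) →
      (g i j ↔ κ) := by
    intro a ha hfree
    have := D.coarse_le ha
    refine rect _ _ _ _ (by omega) (by omega) this le_rfl ?_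
    rintro i j h1 h2 - - ⟨hb, hi, -⟩
    rw [divs a i h1 h2 hi] at hb
    exact hfree _ hb
  have rows : ∀ b, b + 1 ≤ D.n → (∀ a, (a, b) ∉ D.B) →
      ∃ κ : Prop, ∀ i j, 0 ≤ i → i ≤ D.N → b * D.K ≤ j → j ≤ b * D.K + D.K → (i, j) ≠ s →
      (i, j) ≠ t → ¬ ((i = 0 ∨ i = D.N) ∧ (j = b * D.K ∨ j = b * D.K + D.K)) →
      (g i j ↔ κ) := by
    intro b hb hfree
    have := D.coarse_le hb
    refine rect _ _ _ _ (by omega) (by omega) le_rfl this ?_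
    rintro i j - - h1 h2 ⟨hb, -, hj⟩
    rw [divs b j h1 h2 hj] at hb
    exact hfree _ hb
  have row0 : ∀ a, (a, 0) ∉ D.B := fun a h => by have := D.hB _ h; simp at this
  have col0 : ∀ b, (0, b) ∉ D.B := fun b h => by have := D.hB _ h; simp at this
  have rowl : ∀ a, (a, D.n - 1) ∉ D.B := fun a h => by
    have := D.hB _ h; simp only at this; omega
  have coll : ∀ b, (D.n - 1, b) ∉ D.B := fun b h => by
    have := D.hB _ h; simp only at this; omega
  obtain ⟨κ, hκ⟩ := rows 0 (by omega) row0
  have pick : ∀ x y : ℕ, ∃ k, 1 ≤ k ∧ k ≤ 3 ∧ (x + k, y) ≠ s ∧ (x + k, y) ≠ t := by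
    intro x y
    obtain ⟨s1, s2⟩ := s
    obtain ⟨t1, t2⟩ := t
    simp only [ne_eq, Prod.mk.injEq]
    by_cases h0 : x + 1 ≠ s1 ∧ x + 1 ≠ t1
    · exact ⟨1, by omega⟩
    · by_cases h1 : x + 2 ≠ s1 ∧ x + 2 ≠ t1
      · exact ⟨2, by omega⟩
      · exact ⟨3, by omega⟩
  have pick' : ∀ x y : ℕ, ∃ k, 1 ≤ k ∧ k ≤ 3 ∧ (x, y + k) ≠ s ∧ (x, y + k) ≠ t := by
    intro x y
    obtain ⟨s1, s2⟩ := s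
    obtain ⟨t1, t2⟩ := t
    simp only [ne_eq, Prod.mk.injEq]
    by_cases h0 : y + 1 ≠ s2 ∧ y + 1 ≠ t2
    · exact ⟨1, by omega⟩
    · by_cases h1 : y + 2 ≠ s2 ∧ y + 2 ≠ t2
      · exact ⟨2, by omega⟩
      · exact ⟨3, by omega⟩
  have colsκ : ∀ a, a + 1 ≤ D.n → (∀ b, (a, b) ∉ D.B) →
      ∀ i j, a * D.K ≤ i → i ≤ a * D.K + D.K → j ≤ D.N → (i, j) ≠ s →
      (i, j) ≠ t → ¬ ((i = a * D.K ∨ i = a * D.K + D.K) ∧ (j = 0 ∨ j = D.N)) →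
      (g i j ↔ κ) := by
    intro a ha hfree i j h1 h2 h3 h4 h5 h6
    obtain ⟨κ', h'⟩ := cols a ha hfree
    obtain ⟨k, hk1, hk2, hk3, hk4⟩ := pick (a * D.K) 1
    have := D.coarse_le ha
    rw [h' i j h1 h2 (by omega) h3 h4 h5 h6,
      ← h' (a * D.K + k) 1 (by omega) (by omega) (by omega) (by omega) hk3 hk4 (by omega)]
    exact hκ _ _ (by omega) (by omega) (by omega) (by omega) hk3 hk4 (by omega)
  have rowsκ : ∀ b, b + 1 ≤ D.n → (∀ a, (a, b) ∉ D.B) →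
      ∀ i j, i ≤ D.N → b * D.K ≤ j → j ≤ b * D.K + D.K → (i, j) ≠ s →
      (i, j) ≠ t → ¬ ((i = 0 ∨ i = D.N) ∧ (j = b * D.K ∨ j = b * D.K + D.K)) →
      (g i j ↔ κ) := by
    intro b hb hfree i j h1 h2 h3 h4 h5 h6
    obtain ⟨κ', h'⟩ := rows b hb hfree
    obtain ⟨k, hk1, hk2, hk3, hk4⟩ := pick' 1 (b * D.K)
    have := D.coarse_le hb
    rw [h' i j (by omega) h1 h2 h3 h4 h5 h6,
      ← h' 1 (b * D.K + k) (by omega) (by omega) (by omega) (by omega) hk3 hk4 (by omega)]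
    exact colsκ 0 (by omega) col0 _ _ (by omega) (by omega) (by omega) hk3 hk4 (by omega)
  have lastN : (D.n - 1) * D.K + D.K = D.N := by
    unfold N
    conv_rhs => rw [show D.n = (D.n - 1) + 1 by omega]
    rw [add_mul, one_mul]
  -- Points on a coarse line lie in a column or row without blocks.
  have colline : ∀ i j, i ≤ D.N → 0 < j → j < D.N → (i, j) ≠ s → (i, j) ≠ t → i % D.K = 0 →
      (g i j ↔ κ) := by
    intro i j hi hj hj' h4 h5 hm
    obtain ⟨a, rfl⟩ : ∃ a, i = a * D.K := ⟨i / D.K, by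
      have := Nat.div_add_mod i D.K; rw [mul_comm] at this; omega⟩
    have han : a ≤ D.n := by
      by_contra h
      have h1 := Nat.mul_le_mul_right D.K (show D.n + 1 ≤ a by omega)
      rw [add_mul] at h1
      unfold N at hi
      omega
    by_cases hfree : a + 1 ≤ D.n ∧ ∀ b, (a, b) ∉ D.B
    · exact colsκ a hfree.1 hfree.2 _ _ (by omega) (by omega) (by omega) h4 h5 (by omega)
    · have ha0 : a ≠ 0 := by
        rintro rfl
        exact hfree ⟨by omega, col0⟩
      obtain ⟨a, rfl⟩ := Nat.exists_eq_succ_of_ne_zero ha0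
      rw [Nat.succ_eq_add_one, add_mul] at *
      refine colsκ a (by omega) ?_ _ _ (by omega) (by omega) (by omega) h4 h5 (by omega)
      intro b hb
      have hle := (D.hB _ hb).2.1
      simp only at hle
      refine hfree ⟨by omega, fun b' hb' => D.sep1 _ hb _ hb' rfl⟩
  have rowline : ∀ i j, j ≤ D.N → 0 < i → i < D.N → (i, j) ≠ s → (i, j) ≠ t → j % D.K = 0 →
      (g i j ↔ κ) := by
    intro i j hj hi hi' h4 h5 hm
    obtain ⟨a, rfl⟩ : ∃ a, j = a * D.K := ⟨j / D.K, by
      have := Nat.div_add_mod j D.K; rw [mul_comm] at this; omega⟩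
    have han : a ≤ D.n := by
      by_contra h
      have h1 := Nat.mul_le_mul_right D.K (show D.n + 1 ≤ a by omega)
      rw [add_mul] at h1
      unfold N at hj
      omega
    by_cases hfree : a + 1 ≤ D.n ∧ ∀ b, (b, a) ∉ D.B
    · exact rowsκ a hfree.1 hfree.2 _ _ (by omega) (by omega) (by omega) h4 h5 (by omega)
    · have ha0 : a ≠ 0 := by
        rintro rfl
        exact hfree ⟨by omega, row0⟩
      obtain ⟨a, rfl⟩ := Nat.exists_eq_succ_of_ne_zero ha0
      rw [Nat.succ_eq_add_one, add_mul] at *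
      refine rowsκ a (by omega) ?_ _ _ (by omega) (by omega) (by omega) h4 h5 (by omega)
      intro b hb
      have hle := (D.hB _ hb).2.2.2
      simp only at hle
      refine hfree ⟨by omega, fun b' hb' => D.sep2 _ hb _ hb' rfl⟩
  refine ⟨κ, fun i j hi hj hhole h4 h5 hcor => ?_⟩
  have hN0 : D.N % D.K = 0 := by unfold N; simp
  by_cases hj0 : j % D.K = 0 ∧ 0 < i ∧ i < D.N
  · exact rowline i j hj hj0.2.1 hj0.2.2 h4 h5 hj0.1
  by_cases hi0 : i % D.K = 0 ∧ 0 < j ∧ j < D.N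
  · exact colline i j hi hi0.2.1 hi0.2.2 h4 h5 hi0.1
  have hij : i % D.K ≠ 0 ∧ j % D.K ≠ 0 := by
    constructor
    · intro h
      have : j = 0 ∨ j = D.N := by omega
      have hjm : j % D.K = 0 := by rcases this with rfl | rfl <;> simp [hN0]
      omega
    · intro h
      have : i = 0 ∨ i = D.N := by omega
      have him : i % D.K = 0 := by rcases this with rfl | rfl <;> simp [hN0]
      omega
  have hiN : i < D.N := by
    rcases hi.lt_or_eq with h | h
    · exact h
    · exact (hij.1 (h ▸ hN0)).elim
  have hjN : j < D.N := by
    rcases hj.lt_or_eq with h | h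
    · exact h
    · exact (hij.2 (h ▸ hN0)).elim
  have hB : (i / D.K, j / D.K) ∉ D.B := fun h => hhole ⟨h, hij⟩
  obtain ⟨_, i2⟩ := div_bounds D.hK0 i
  obtain ⟨_, j2⟩ := div_bounds D.hK0 j
  have i1 := div_bounds_lt hij.1
  have j1 := div_bounds_lt hij.2
  have ian : i / D.K + 1 ≤ D.n := Nat.div_lt_of_lt_mul (by rw [mul_comm]; exact hiN)
  have jan : j / D.K + 1 ≤ D.n := Nat.div_lt_of_lt_mul (by rw [mul_comm]; exact hjN)
  have iN := D.coarse_le ian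
  have jN := D.coarse_le jan
  rw [add_mul, one_mul] at i2 j2
  obtain ⟨κ', h'⟩ := rect (i / D.K * D.K) (i / D.K * D.K + D.K) (j / D.K * D.K)
    (j / D.K * D.K + D.K) (by omega) (by omega) iN jN (by
      rintro x y h1 h2 h3 h4 ⟨hb, hx, hy⟩
      rw [divs _ _ h1 h2 hx, divs _ _ h3 h4 hy] at hb
      exact hB hb)
  obtain ⟨k, hk1, hk2, hk3, hk4⟩ := pick' (i / D.K * D.K) (j / D.K * D.K)
  rw [h' i j i1.le i2.le j1.le j2.le h4 h5 (by omega),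
    ← h' _ _ le_rfl (by omega) (by omega) (by omega) hk3 hk4 (by omega)]
  exact colline _ _ (by omega) (by omega) (by omega) hk3 hk4 (by simp)

end BlockGrid

/-! ### The plane graph of a grid with blocks -/

theorem mem_segment_hor {x₁ x₂ y : ℝ} (h : x₁ ≤ x₂) (z : Pt) :
    z ∈ segment ℝ ((x₁, y) : Pt) (x₂, y) ↔ z.2 = y ∧ x₁ ≤ z.1 ∧ z.1 ≤ x₂ := by
  rw [← Prod.image_mk_segment_left, segment_eq_Icc h]
  constructor
  · rintro ⟨x, hx, rfl⟩; exact ⟨rfl, hx⟩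
  · rintro ⟨rfl, hx⟩; exact ⟨z.1, hx, rfl⟩

theorem mem_segment_ver {x y₁ y₂ : ℝ} (h : y₁ ≤ y₂) (z : Pt) :
    z ∈ segment ℝ ((x, y₁) : Pt) (x, y₂) ↔ z.1 = x ∧ y₁ ≤ z.2 ∧ z.2 ≤ y₂ := by
  rw [← Prod.image_mk_segment_right, segment_eq_Icc h]
  constructor
  · rintro ⟨x, hx, rfl⟩; exact ⟨rfl, hx⟩
  · rintro ⟨rfl, hx⟩; exact ⟨z.2, hx, rfl⟩

theorem exists_step {f : ℕ → ℝ} {a b : ℕ} {z : ℝ} (hab : a < b) (h1 : f a ≤ z) (h2 : z ≤ f b) :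
    ∃ j, a ≤ j ∧ j < b ∧ f j ≤ z ∧ z ≤ f (j + 1) := by
  induction b with
  | zero => omega
  | succ b ih =>
    by_cases h : f b ≤ z
    · exact ⟨b, by omega, by omega, h, h2⟩
    · rcases Nat.lt_succ_iff_lt_or_eq.1 hab with h' | h'
      · obtain ⟨j, hj⟩ := ih h' (not_le.1 h).le
        exact ⟨j, hj.1, by omega, hj.2.2⟩
      · exact (h (h' ▸ h1)).elim

/-- The point `z` lies on the boundary of the rectangle `[x₁, x₂] × [y₁, y₂]`. -/
def OnRect (x₁ x₂ y₁ y₂ : ℝ) (z : Pt) : Prop :=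
  (x₁ ≤ z.1 ∧ z.1 ≤ x₂ ∧ y₁ ≤ z.2 ∧ z.2 ≤ y₂) ∧ (z.1 = x₁ ∨ z.1 = x₂ ∨ z.2 = y₁ ∨ z.2 = y₂)

theorem onRect_of_frontier_Ioo {x₁ x₂ y₁ y₂ : ℝ} (hx : x₁ < x₂) (hy : y₁ < y₂) {z : Pt}
    (hz : z ∈ frontier (Ioo x₁ x₂ ×ˢ Ioo y₁ y₂)) : OnRect x₁ x₂ y₁ y₂ z := by
  rw [frontier_prod_eq, closure_Ioo hx.ne, closure_Ioo hy.ne, frontier_Ioo hx, frontier_Ioo hy] at hz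
  rcases hz with ⟨h1, h2⟩ | ⟨h1, h2⟩
  · rcases h2 with h2 | h2
    · exact ⟨⟨h1.1, h1.2, h2.ge, h2 ▸ hy.le⟩, by tauto⟩
    · exact ⟨⟨h1.1, h1.2, (show z.2 = y₂ from h2) ▸ hy.le, (show z.2 = y₂ from h2).le⟩, by tauto⟩
  · rcases h1 with h1 | h1
    · exact ⟨⟨h1.ge, h1 ▸ hx.le, h2.1, h2.2⟩, by tauto⟩
    · exact ⟨⟨(show z.1 = x₂ from h1) ▸ hx.le, (show z.1 = x₂ from h1).le, h2.1, h2.2⟩, by tauto⟩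

theorem onRect_of_frontier_Icc {x₁ x₂ y₁ y₂ : ℝ} (hx : x₁ < x₂) (hy : y₁ < y₂) {z : Pt}
    (hz : z ∈ frontier (Icc x₁ x₂ ×ˢ Icc y₁ y₂)) : OnRect x₁ x₂ y₁ y₂ z := by
  apply onRect_of_frontier_Ioo hx hy
  rw [frontier_prod_eq, (frontier_Icc hx.le : frontier (Icc x₁ x₂) = _),
    (frontier_Icc hy.le : frontier (Icc y₁ y₂) = _), closure_Icc, closure_Icc] at hz
  rwa [frontier_prod_eq, closure_Ioo hx.ne, closure_Ioo hy.ne, frontier_Ioo hx, frontier_Ioo hy]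

theorem preconnected_subset_of_frontier {F U : Set Pt} (hF : IsPreconnected F)
    (hd : ∀ z ∈ frontier U, z ∉ F) (hne : (F ∩ U).Nonempty) : F ⊆ U := by
  have hU : F ⊆ interior U ∪ (closure U)ᶜ := by
    intro z hz
    by_contra h
    simp only [mem_union, mem_compl_iff, not_or, not_not] at h
    exact hd z ⟨h.2, h.1⟩ hz
  refine (hF.subset_left_of_subset_union isOpen_interior isClosed_closure.isOpen_compl ?_ hU ?_).trans
    interior_subset
  · exact disjoint_left.2 fun z h1 h2 => h2 (subset_closure (interior_subset h1))
  · obtain ⟨z, hz, hzU⟩ := hne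
    refine ⟨z, hz, (hU hz).resolve_right fun h => h (subset_closure hzU)⟩

namespace BlockGrid

variable (D : BlockGrid)

open Classical in
/-- The vertices: the points of the fine grid that are not strictly inside a block. -/
noncomputable def verts : Finset Pt :=
  ((Finset.range (D.N + 1) ×ˢ Finset.range (D.N + 1)).filter
    (fun p => ¬ D.Hole p.1 p.2)).image (fun p => (D.X p.1, D.Y p.2))

open Classical in
/-- The edges: all unit steps of the fine grid between two vertices, directed to the right or
upwards. -/
noncomputable def edges : Finset (Pt × Pt) :=
  ((Finset.range D.N ×ˢ Finset.range (D.N + 1)).filter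
    (fun p => ¬ D.Hole p.1 p.2 ∧ ¬ D.Hole (p.1 + 1) p.2)).image
      (fun p => ((D.X p.1, D.Y p.2), (D.X (p.1 + 1), D.Y p.2))) ∪
  ((Finset.range (D.N + 1) ×ˢ Finset.range D.N).filter
    (fun p => ¬ D.Hole p.1 p.2 ∧ ¬ D.Hole p.1 (p.2 + 1))).image
      (fun p => ((D.X p.1, D.Y p.2), (D.X p.1, D.Y (p.2 + 1))))

theorem mem_verts {w : Pt} : w ∈ D.verts ↔
    ∃ i j, i ≤ D.N ∧ j ≤ D.N ∧ ¬ D.Hole i j ∧ w = (D.X i, D.Y j) := by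
  simp only [verts, Finset.mem_image, Finset.mem_filter, Finset.mem_product, Finset.mem_range,
    Nat.lt_succ_iff]
  constructor
  · rintro ⟨⟨i, j⟩, ⟨⟨h1, h2⟩, h3⟩, rfl⟩
    exact ⟨i, j, h1, h2, h3, rfl⟩
  · rintro ⟨i, j, h1, h2, h3, rfl⟩
    exact ⟨⟨i, j⟩, ⟨⟨h1, h2⟩, h3⟩, rfl⟩

theorem mem_edges {e : Pt × Pt} : e ∈ D.edges ↔
    (∃ i j, i < D.N ∧ j ≤ D.N ∧ ¬ D.Hole i j ∧ ¬ D.Hole (i + 1) j ∧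
      e = ((D.X i, D.Y j), (D.X (i + 1), D.Y j))) ∨
    (∃ i j, i ≤ D.N ∧ j < D.N ∧ ¬ D.Hole i j ∧ ¬ D.Hole i (j + 1) ∧
      e = ((D.X i, D.Y j), (D.X i, D.Y (j + 1)))) := by
  simp only [edges, Finset.mem_union, Finset.mem_image, Finset.mem_filter, Finset.mem_product,
    Finset.mem_range, Nat.lt_succ_iff]
  constructor
  · rintro (⟨⟨i, j⟩, ⟨⟨h1, h2⟩, h3, h4⟩, rfl⟩ | ⟨⟨i, j⟩, ⟨⟨h1, h2⟩, h3, h4⟩, rfl⟩)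
    · exact Or.inl ⟨i, j, h1, h2, h3, h4, rfl⟩
    · exact Or.inr ⟨i, j, h1, h2, h3, h4, rfl⟩
  · rintro (⟨i, j, h1, h2, h3, h4, rfl⟩ | ⟨i, j, h1, h2, h3, h4, rfl⟩)
    · exact Or.inl ⟨⟨i, j⟩, ⟨⟨h1, h2⟩, h3, h4⟩, rfl⟩
    · exact Or.inr ⟨⟨i, j⟩, ⟨⟨h1, h2⟩, h3, h4⟩, rfl⟩

theorem stepX (i : ℕ) : D.X i ≤ D.X (i + 1) := D.hX.monotone (Nat.le_succ i)

theorem stepY (j : ℕ) : D.Y j ≤ D.Y (j + 1) := D.hY.monotone (Nat.le_succ j)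

/-- Two unit intervals of a strictly increasing sequence meet only in common end points. -/
theorem step_meet {f : ℕ → ℝ} (hf : StrictMono f) {i i' : ℕ} {z : ℝ} (h1 : f i ≤ z)
    (h2 : z ≤ f (i + 1)) (h3 : f i' ≤ z) (h4 : z ≤ f (i' + 1)) (hne : i ≠ i') :
    (z = f i ∨ z = f (i + 1)) ∧ (z = f i' ∨ z = f (i' + 1)) := by
  have a1 := hf.le_iff_le.1 (h1.trans h4)
  have a2 := hf.le_iff_le.1 (h3.trans h2)
  rcases (by omega : i' = i + 1 ∨ i = i' + 1) with rfl | rfl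
  · have := le_antisymm h2 h3; tauto
  · have := le_antisymm h4 h1; tauto

theorem step_point {f : ℕ → ℝ} (hf : StrictMono f) {i i' : ℕ} (h1 : f i ≤ f i')
    (h2 : f i' ≤ f (i + 1)) : i' = i ∨ i' = i + 1 := by
  have a1 := hf.le_iff_le.1 h1
  have a2 := hf.le_iff_le.1 h2
  omega

/-- The plane graph formed by the vertices and edges of a grid with blocks. -/
noncomputable def graph : GridPlaneGraph where
  verts := D.verts
  edges := D.edges
  ends_mem := by
    intro e he
    rw [mem_edges] at he
    rcases he with ⟨i, j, h1, h2, h3, h4, rfl⟩ | ⟨i, j, h1, h2, h3, h4, rfl⟩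
    · exact ⟨D.mem_verts.2 ⟨i, j, h1.le, h2, h3, rfl⟩, D.mem_verts.2 ⟨i + 1, j, h1, h2, h4, rfl⟩⟩
    · exact ⟨D.mem_verts.2 ⟨i, j, h1, h2.le, h3, rfl⟩, D.mem_verts.2 ⟨i, j + 1, h1, h2, h4, rfl⟩⟩
  nondeg := by
    intro e he
    rw [mem_edges] at he
    rcases he with ⟨i, j, h1, h2, h3, h4, rfl⟩ | ⟨i, j, h1, h2, h3, h4, rfl⟩
    · simp [D.hX.injective.eq_iff]
    · simp [D.hY.injective.eq_iff]
  axisAligned := by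
    intro e he
    rw [mem_edges] at he
    rcases he with ⟨i, j, h1, h2, h3, h4, rfl⟩ | ⟨i, j, h1, h2, h3, h4, rfl⟩ <;> simp
  meet_at_ends := by
    intro e he f hf hne _ x hx hx'
    rw [mem_edges] at he hf
    rcases he with ⟨i, j, -, -, -, -, rfl⟩ | ⟨i, j, -, -, -, -, rfl⟩ <;>
    rcases hf with ⟨i', j', -, -, -, -, rfl⟩ | ⟨i', j', -, -, -, -, rfl⟩ <;>
    simp only [mem_segment_hor (D.stepX _), mem_segment_ver (D.stepY _)] at hx hx' <;>
    simp only [Prod.ext_iff]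
    · obtain ⟨e1, a1, a2⟩ := hx
      obtain ⟨e2, b1, b2⟩ := hx'
      have hj : j = j' := D.hY.injective (e1.symm.trans e2)
      subst hj
      have := step_meet D.hX a1 a2 b1 b2 (by rintro rfl; exact hne rfl)
      tauto
    · obtain ⟨e1, a1, a2⟩ := hx
      obtain ⟨e2, b1, b2⟩ := hx'
      rw [e2] at a1 a2
      rw [e1] at b1 b2
      rcases step_point D.hX a1 a2 with rfl | rfl <;> rcases step_point D.hY b1 b2 with rfl | rfl <;>
        tauto
    · obtain ⟨e1, a1, a2⟩ := hx
      obtain ⟨e2, b1, b2⟩ := hx'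
      rw [e2] at a1 a2
      rw [e1] at b1 b2
      rcases step_point D.hY a1 a2 with rfl | rfl <;> rcases step_point D.hX b1 b2 with rfl | rfl <;>
        tauto
    · obtain ⟨e1, a1, a2⟩ := hx
      obtain ⟨e2, b1, b2⟩ := hx'
      have hj : i = i' := D.hX.injective (e1.symm.trans e2)
      subst hj
      have := step_meet D.hY a1 a2 b1 b2 (by rintro rfl; exact hne rfl)
      tauto
  no_vertex_interior := by
    intro e he v hv hx
    rw [mem_edges] at he
    obtain ⟨i', j', -, -, -, rfl⟩ := D.mem_verts.1 hv
    rcases he with ⟨i, j, -, -, -, -, rfl⟩ | ⟨i, j, -, -, -, -, rfl⟩ <;>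
    simp only [mem_segment_hor (D.stepX _), mem_segment_ver (D.stepY _)] at hx <;>
    simp only [Prod.ext_iff]
    · rcases step_point D.hX hx.2.1 hx.2.2 with rfl | rfl <;> tauto
    · rcases step_point D.hY hx.2.1 hx.2.2 with rfl | rfl <;> tauto

theorem mem_drawing {z : Pt} : z ∈ D.graph.drawing ↔
    (∃ i j, i < D.N ∧ j ≤ D.N ∧ ¬ D.Hole i j ∧ ¬ D.Hole (i + 1) j ∧
      z.2 = D.Y j ∧ D.X i ≤ z.1 ∧ z.1 ≤ D.X (i + 1)) ∨
    (∃ i j, i ≤ D.N ∧ j < D.N ∧ ¬ D.Hole i j ∧ ¬ D.Hole i (j + 1) ∧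
      z.1 = D.X i ∧ D.Y j ≤ z.2 ∧ z.2 ≤ D.Y (j + 1)) := by
  have : D.graph.edges = D.edges := rfl
  simp only [GridPlaneGraph.drawing, mem_iUnion, this, D.mem_edges, exists_prop]
  constructor
  · rintro ⟨e, ⟨i, j, h1, h2, h3, h4, rfl⟩ | ⟨i, j, h1, h2, h3, h4, rfl⟩, hz⟩
    · exact Or.inl ⟨i, j, h1, h2, h3, h4, (mem_segment_hor (D.stepX _) _).1 hz⟩
    · exact Or.inr ⟨i, j, h1, h2, h3, h4, (mem_segment_ver (D.stepY _) _).1 hz⟩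
  · rintro (⟨i, j, h1, h2, h3, h4, hz⟩ | ⟨i, j, h1, h2, h3, h4, hz⟩)
    · exact ⟨_, Or.inl ⟨i, j, h1, h2, h3, h4, rfl⟩, (mem_segment_hor (D.stepX _) _).2 hz⟩
    · exact ⟨_, Or.inr ⟨i, j, h1, h2, h3, h4, rfl⟩, (mem_segment_ver (D.stepY _) _).2 hz⟩

/-! ### The faces of a grid with blocks -/

/-- A fine cell, given by the indices of its lower left corner, that does not lie in a block. -/
def IsFine (i j : ℕ) : Prop := i < D.N ∧ j < D.N ∧ (i / D.K, j / D.K) ∉ D.B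

/-- The index rectangles of the bounded faces: fine cells and blocks. -/
def IsCell (i₁ i₂ j₁ j₂ : ℕ) : Prop :=
  (D.IsFine i₁ j₁ ∧ i₂ = i₁ + 1 ∧ j₂ = j₁ + 1) ∨
  ∃ a b, (a, b) ∈ D.B ∧ i₁ = a * D.K ∧ i₂ = (a + 1) * D.K ∧ j₁ = b * D.K ∧ j₂ = (b + 1) * D.K

theorem succ_div_of_mod {K i : ℕ} (h : (i + 1) % K ≠ 0) : (i + 1) / K = i / K :=
  Nat.succ_div_of_not_dvd fun hd => h (Nat.mod_eq_zero_of_dvd hd)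

variable {D}

theorem IsCell.bounds {i₁ i₂ j₁ j₂ : ℕ} (h : D.IsCell i₁ i₂ j₁ j₂) :
    i₁ < i₂ ∧ i₂ ≤ D.N ∧ j₁ < j₂ ∧ j₂ ≤ D.N := by
  have hK := D.hK
  rcases h with ⟨⟨h1, h2, -⟩, rfl, rfl⟩ | ⟨a, b, hab, rfl, rfl, rfl, rfl⟩
  · omega
  · have := D.hB _ hab
    simp only at this
    have h1 := D.coarse_le (a := a) (by omega)
    have h2 := D.coarse_le (a := b) (by omega)
    simp only [add_mul]
    omega

theorem IsCell.not_hole {i₁ i₂ j₁ j₂ : ℕ} (h : D.IsCell i₁ i₂ j₁ j₂) {i j : ℕ} (hi : i₁ ≤ i)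
    (hi' : i ≤ i₂) (hj : j₁ ≤ j) (hj' : j ≤ j₂) (hs : i = i₁ ∨ i = i₂ ∨ j = j₁ ∨ j = j₂) :
    ¬ D.Hole i j := by
  rintro ⟨hB, hmi, hmj⟩
  rcases h with ⟨⟨h1, h2, h3⟩, rfl, rfl⟩ | ⟨a, b, hab, rfl, rfl, rfl, rfl⟩
  · have e1 : i / D.K = i₁ / D.K := by
      rcases (by omega : i = i₁ ∨ i = i₁ + 1) with rfl | rfl
      · rfl
      · exact succ_div_of_mod hmi
    have e2 : j / D.K = j₁ / D.K := by
      rcases (by omega : j = j₁ ∨ j = j₁ + 1) with rfl | rfl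
      · rfl
      · exact succ_div_of_mod hmj
    rw [e1, e2] at hB
    exact h3 hB
  · rcases hs with rfl | rfl | rfl | rfl
    · simp at hmi
    · simp at hmi
    · simp at hmj
    · simp at hmj

/-- The boundary of a rectangle of grid lines belongs to the drawing, if no grid point on it is
inside a block. -/
theorem onRect_mem_drawing {i₁ i₂ j₁ j₂ : ℕ} (hi : i₁ < i₂) (hi' : i₂ ≤ D.N) (hj : j₁ < j₂)
    (hj' : j₂ ≤ D.N)
    (hh : ∀ i j, i₁ ≤ i → i ≤ i₂ → j₁ ≤ j → j ≤ j₂ → (i = i₁ ∨ i = i₂ ∨ j = j₁ ∨ j = j₂) →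
      ¬ D.Hole i j) {z : Pt} (hz : OnRect (D.X i₁) (D.X i₂) (D.Y j₁) (D.Y j₂) z) :
    z ∈ D.graph.drawing := by
  obtain ⟨⟨h1, h2, h3, h4⟩, h5⟩ := hz
  rw [mem_drawing]
  obtain ⟨i, a1, a2, a3, a4⟩ := exists_step hi h1 h2
  obtain ⟨j, b1, b2, b3, b4⟩ := exists_step hj h3 h4
  rcases h5 with h | h | h | h
  · exact Or.inr ⟨i₁, j, by omega, by omega, hh _ _ (by omega) (by omega) (by omega) (by omega)
      (by omega), hh _ _ (by omega) (by omega) (by omega) (by omega) (by omega), h, b3, b4⟩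
  · exact Or.inr ⟨i₂, j, by omega, by omega, hh _ _ (by omega) (by omega) (by omega) (by omega)
      (by omega), hh _ _ (by omega) (by omega) (by omega) (by omega) (by omega), h, b3, b4⟩
  · exact Or.inl ⟨i, j₁, by omega, by omega, hh _ _ (by omega) (by omega) (by omega) (by omega)
      (by omega), hh _ _ (by omega) (by omega) (by omega) (by omega) (by omega), h, a3, a4⟩
  · exact Or.inl ⟨i, j₂, by omega, by omega, hh _ _ (by omega) (by omega) (by omega) (by omega)
      (by omega), hh _ _ (by omega) (by omega) (by omega) (by omega) (by omega), h, a3, a4⟩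

theorem IsCell.onRect_mem {i₁ i₂ j₁ j₂ : ℕ} (h : D.IsCell i₁ i₂ j₁ j₂) {z : Pt}
    (hz : OnRect (D.X i₁) (D.X i₂) (D.Y j₁) (D.Y j₂) z) : z ∈ D.graph.drawing := by
  obtain ⟨h1, h2, h3, h4⟩ := h.bounds
  exact onRect_mem_drawing h1 h2 h3 h4 (fun i j a1 a2 a3 a4 a5 => h.not_hole a1 a2 a3 a4 a5) hz

theorem IsCell.disjoint_drawing {i₁ i₂ j₁ j₂ : ℕ} (h : D.IsCell i₁ i₂ j₁ j₂) {z : Pt}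
    (hz : z ∈ Ioo (D.X i₁) (D.X i₂) ×ˢ Ioo (D.Y j₁) (D.Y j₂)) : z ∉ D.graph.drawing := by
  obtain ⟨⟨x1, x2⟩, ⟨y1, y2⟩⟩ := hz
  have hK := D.hK
  rw [mem_drawing]
  rintro (⟨i, j, -, -, n1, n2, e, a1, a2⟩ | ⟨i, j, -, -, n1, n2, e, a1, a2⟩)
  · rw [e] at y1 y2
    have b1 := D.hY.lt_iff_lt.1 y1
    have b2 := D.hY.lt_iff_lt.1 y2
    have b3 := D.hX.lt_iff_lt.1 (x1.trans_le a2)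
    have b4 := D.hX.lt_iff_lt.1 (a1.trans_lt x2)
    rcases h with ⟨-, rfl, rfl⟩ | ⟨a, b, hab, rfl, rfl, rfl, rfl⟩
    · omega
    · obtain ⟨d1, d2⟩ := div_of_between b1 b2
      by_cases hi : a * D.K < i
      · obtain ⟨c1, c2⟩ := div_of_between hi b4
        exact n1 ⟨by rwa [c1, d1], c2, d2⟩
      · obtain ⟨c1, c2⟩ := div_of_between b3 (by rw [add_mul] at *; omega)
        exact n2 ⟨by rwa [c1, d1], c2, d2⟩
  · rw [e] at x1 x2
    have b1 := D.hX.lt_iff_lt.1 x1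
    have b2 := D.hX.lt_iff_lt.1 x2
    have b3 := D.hY.lt_iff_lt.1 (y1.trans_le a2)
    have b4 := D.hY.lt_iff_lt.1 (a1.trans_lt y2)
    rcases h with ⟨-, rfl, rfl⟩ | ⟨a, b, hab, rfl, rfl, rfl, rfl⟩
    · omega
    · obtain ⟨d1, d2⟩ := div_of_between b1 b2
      by_cases hi : b * D.K < j
      · obtain ⟨c1, c2⟩ := div_of_between hi b4
        exact n1 ⟨by rwa [c1, d1], d2, c2⟩
      · obtain ⟨c1, c2⟩ := div_of_between b3 (by rw [add_mul] at *; omega)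
        exact n2 ⟨by rwa [c1, d1], d2, c2⟩

/-- The closed rectangle covered by the grid. -/
def frame (D : BlockGrid) : Set Pt := Icc (D.X 0) (D.X D.N) ×ˢ Icc (D.Y 0) (D.Y D.N)

theorem exists_cell {z : Pt} (hz : z ∈ D.frame) : ∃ i₁ i₂ j₁ j₂, D.IsCell i₁ i₂ j₁ j₂ ∧
    D.X i₁ ≤ z.1 ∧ z.1 ≤ D.X i₂ ∧ D.Y j₁ ≤ z.2 ∧ z.2 ≤ D.Y j₂ := by
  have hN := D.N_ge
  obtain ⟨⟨x1, x2⟩, ⟨y1, y2⟩⟩ := hz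
  obtain ⟨i, a1, a2, a3, a4⟩ := exists_step (by omega) x1 x2
  obtain ⟨j, b1, b2, b3, b4⟩ := exists_step (by omega) y1 y2
  by_cases hB : (i / D.K, j / D.K) ∈ D.B
  · refine ⟨_, _, _, _, Or.inr ⟨_, _, hB, rfl, rfl, rfl, rfl⟩, ?_⟩
    obtain ⟨c1, c2⟩ := div_bounds D.hK0 i
    obtain ⟨d1, d2⟩ := div_bounds D.hK0 j
    exact ⟨(D.hX.monotone c1).trans a3, a4.trans (D.hX.monotone c2),
      (D.hY.monotone d1).trans b3, b4.trans (D.hY.monotone d2)⟩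
  · exact ⟨i, i + 1, j, j + 1, Or.inl ⟨⟨a2, b2, hB⟩, rfl, rfl⟩, a3, a4, b3, b4⟩

theorem drawing_subset_frame {z : Pt} (hz : z ∈ D.graph.drawing) : z ∈ D.frame := by
  have m := D.hX.monotone
  have m' := D.hY.monotone
  rw [mem_drawing] at hz
  rcases hz with ⟨i, j, h1, h2, -, -, e, a1, a2⟩ | ⟨i, j, h1, h2, -, -, e, a1, a2⟩
  · exact ⟨⟨(m (Nat.zero_le _)).trans a1, a2.trans (m h1)⟩,
      by rw [e]; exact ⟨m' (Nat.zero_le _), m' h2⟩⟩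
  · exact ⟨by rw [e]; exact ⟨m (Nat.zero_le _), m h1⟩,
      ⟨(m' (Nat.zero_le _)).trans a1, a2.trans (m' h2)⟩⟩

theorem not_bounded_of_halfplane {F : Set Pt} (hb : Bornology.IsBounded F) (x : Pt) :
    (¬ {z : Pt | z.1 ≤ x.1} ⊆ F) ∧ (¬ {z : Pt | x.1 ≤ z.1} ⊆ F) ∧
    (¬ {z : Pt | z.2 ≤ x.2} ⊆ F) ∧ (¬ {z : Pt | x.2 ≤ z.2} ⊆ F) := by
  have key : ∀ d : Pt, d ≠ 0 → (∀ r : ℝ, 0 ≤ r → x + r • d ∈ F) → False := by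
    intro d hd h
    obtain ⟨C, hC⟩ := isBounded_iff_forall_norm_le.1 hb
    have hd' : 0 < ‖d‖ := norm_pos_iff.2 hd
    have h0 : 0 ≤ (C + ‖x‖ + 1) / ‖d‖ := by
      have := (norm_nonneg _).trans (hC _ (h 0 le_rfl))
      positivity
    have h1 := hC _ (h _ h0)
    have h2 := norm_sub_norm_le (((C + ‖x‖ + 1) / ‖d‖) • d) (-x)
    rw [norm_smul, Real.norm_eq_abs, abs_of_nonneg h0, div_mul_cancel₀ _ hd'.ne', norm_neg,
      sub_neg_eq_add, add_comm _ x] at h2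
    linarith
  refine ⟨fun h => key (-1, 0) (by simp) fun r hr => h ?_,
    fun h => key (1, 0) (by simp) fun r hr => h ?_,
    fun h => key (0, -1) (by simp) fun r hr => h ?_,
    fun h => key (0, 1) (by simp) fun r hr => h ?_⟩ <;> simp [hr]

/-- Every face is a cell of the grid, or is unbounded and lies outside the frame. -/
theorem face_cases {F : Set Pt} (hF : D.graph.IsFace F) :
    (∃ i₁ i₂ j₁ j₂, D.IsCell i₁ i₂ j₁ j₂ ∧
      F = Ioo (D.X i₁) (D.X i₂) ×ˢ Ioo (D.Y j₁) (D.Y j₂)) ∨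
    ((∀ z ∈ F, z ∉ D.frame) ∧ ¬ Bornology.IsBounded F) := by
  have hN := D.N_ge
  obtain ⟨x, hx, rfl⟩ := hF
  have hsub := connectedComponentIn_subset D.graph.drawingᶜ x
  have hxF : x ∈ connectedComponentIn D.graph.drawingᶜ x := mem_connectedComponentIn hx
  by_cases hfr : x ∈ D.frame
  · left
    obtain ⟨i₁, i₂, j₁, j₂, hc, h1, h2, h3, h4⟩ := exists_cell hfr
    refine ⟨i₁, i₂, j₁, j₂, hc, ?_⟩
    have hxo : x ∈ Ioo (D.X i₁) (D.X i₂) ×ˢ Ioo (D.Y j₁) (D.Y j₂) := by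
      by_contra h
      refine hx (hc.onRect_mem ⟨⟨h1, h2, h3, h4⟩, ?_⟩)
      by_contra h'
      push Not at h'
      exact h ⟨⟨lt_of_le_of_ne h1 h'.1.symm, lt_of_le_of_ne h2 h'.2.1⟩,
        ⟨lt_of_le_of_ne h3 h'.2.2.1.symm, lt_of_le_of_ne h4 h'.2.2.2⟩⟩
    apply Subset.antisymm
    · refine preconnected_subset_of_frontier isPreconnected_connectedComponentIn ?_ ⟨x, hxF, hxo⟩
      intro z hz hz'
      exact hsub hz' (hc.onRect_mem (onRect_of_frontier_Ioo (D.hX hc.bounds.1)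
        (D.hY hc.bounds.2.2.1) hz))
    · refine IsPreconnected.subset_connectedComponentIn ?_ hxo
        (fun z hz => hc.disjoint_drawing hz)
      exact ((convex_Ioo _ _).prod (convex_Ioo _ _)).isPreconnected
  · right
    constructor
    · intro z hz hzf
      refine hfr (preconnected_subset_of_frontier (U := D.frame)
        isPreconnected_connectedComponentIn ?_ ⟨z, hz, hzf⟩ hxF)
      intro w hw hw'
      refine hsub hw' (onRect_mem_drawing (i₁ := 0) (i₂ := D.N) (j₁ := 0) (j₂ := D.N) (by omega)
        le_rfl (by omega) le_rfl ?_ (onRect_of_frontier_Icc (D.hX (by omega)) (D.hY (by omega)) hw))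
      rintro i j - - - - h ⟨-, hi, hj⟩
      have hN0 : D.N % D.K = 0 := by unfold N; simp
      rcases h with rfl | rfl | rfl | rfl <;> simp_all
    · intro hb
      obtain ⟨n1, n2, n3, n4⟩ := not_bounded_of_halfplane hb x
      have sub : ∀ P : Set Pt, Convex ℝ P → x ∈ P → (∀ z ∈ P, z ∉ D.frame) →
          P ⊆ connectedComponentIn D.graph.drawingᶜ x := fun P hP hxP hd =>
        hP.isPreconnected.subset_connectedComponentIn hxP
          fun z hz hz' => hd z hz (drawing_subset_frame hz')
      have c1 : IsLinearMap ℝ (fun z : Pt => z.1) := ⟨fun _ _ => rfl, fun _ _ => rfl⟩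
      have c2 : IsLinearMap ℝ (fun z : Pt => z.2) := ⟨fun _ _ => rfl, fun _ _ => rfl⟩
      by_cases h1 : D.X 0 ≤ x.1
      · by_cases h2 : x.1 ≤ D.X D.N
        · by_cases h3 : D.Y 0 ≤ x.2
          · by_cases h4 : x.2 ≤ D.Y D.N
            · exact hfr ⟨⟨h1, h2⟩, ⟨h3, h4⟩⟩
            · exact n4 (sub _ (convex_halfSpace_ge c2 _) (le_refl x.2)
                fun z hz hz' => h4 (le_trans hz hz'.2.2))
          · exact n3 (sub _ (convex_halfSpace_le c2 _) (le_refl x.2)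
              fun z hz hz' => h3 (le_trans hz'.2.1 hz))
        · exact n2 (sub _ (convex_halfSpace_ge c1 _) (le_refl x.1)
            fun z hz hz' => h2 (le_trans hz hz'.1.2))
      · exact n1 (sub _ (convex_halfSpace_le c1 _) (le_refl x.1)
          fun z hz hz' => h1 (le_trans hz'.1.1 hz))

/-- Every edge lies on the boundary of a fine cell, since blocks are not adjacent. -/
theorem edge_in_fine {e : Pt × Pt} (he : e ∈ D.graph.edges) : ∃ i j, D.IsFine i j ∧
    (∀ z ∈ segment ℝ e.1 e.2, (D.X i ≤ z.1 ∧ z.1 ≤ D.X (i + 1)) ∧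
      D.Y j ≤ z.2 ∧ z.2 ≤ D.Y (j + 1)) ∧
    ((∃ k, ∀ z ∈ segment ℝ e.1 e.2, z.1 = D.X k) ∨
      ∃ k, ∀ z ∈ segment ℝ e.1 e.2, z.2 = D.Y k) := by
  have hK := D.hK
  have hn := D.hn
  have hmod : ∀ {i : ℕ}, i % D.K = 0 → (i + 1) % D.K ≠ 0 := by
    intro i hi
    rw [Nat.add_mod, hi, zero_add, Nat.mod_mod, Nat.mod_eq_of_lt (by omega)]
    omega
  replace he : e ∈ D.edges := he
  rw [mem_edges] at he
  rcases he with ⟨i, j, h1, h2, h3, h4, rfl⟩ | ⟨i, j, h1, h2, h3, h4, rfl⟩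
  · simp only [mem_segment_hor (D.stepX i)]
    by_cases hf : D.IsFine i j
    · exact ⟨i, j, hf, fun z hz => ⟨hz.2, hz.1.ge, hz.1 ▸ D.stepY j⟩, Or.inr ⟨j, fun z hz => hz.1⟩⟩
    · have hj0 : j ≠ 0 := by
        rintro rfl
        refine hf ⟨h1, by have := D.N_ge; omega, fun h => ?_⟩
        have := D.hB _ h
        simp at this
      obtain ⟨j, rfl⟩ := Nat.exists_eq_succ_of_ne_zero hj0
      simp only [Nat.succ_eq_add_one] at *
      refine ⟨i, j, ⟨h1, by omega, fun hB => hf ⟨h1, ?_, fun hB' => ?_⟩⟩,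
        fun z hz => ⟨hz.2, hz.1 ▸ D.stepY j, hz.1.le⟩, Or.inr ⟨j + 1, fun z hz => hz.1⟩⟩
      · rcases h2.lt_or_eq with h | h
        · exact h
        · have h6 := (D.hB _ hB).2.2.2
          simp only at h6
          have h7 := (div_bounds D.hK0 j).2
          have h8 := D.coarse_le (a := j / D.K + 1) (by omega)
          omega
      · by_cases hm : (j + 1) % D.K = 0
        · refine D.sep2 _ hB _ hB' ?_
          exact Nat.succ_div_of_dvd (Nat.dvd_of_mod_eq_zero hm)
        · by_cases hi : i % D.K = 0
          · have := hmod hi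
            exact h4 ⟨by rwa [succ_div_of_mod this], this, hm⟩
          · exact h3 ⟨hB', hi, hm⟩
  · simp only [mem_segment_ver (D.stepY j)]
    by_cases hf : D.IsFine i j
    · exact ⟨i, j, hf, fun z hz => ⟨⟨hz.1.ge, hz.1 ▸ D.stepX i⟩, hz.2⟩, Or.inl ⟨i, fun z hz => hz.1⟩⟩
    · have hi0 : i ≠ 0 := by
        rintro rfl
        refine hf ⟨by have := D.N_ge; omega, h2, fun h => ?_⟩
        have := D.hB _ h
        simp at this
      obtain ⟨i, rfl⟩ := Nat.exists_eq_succ_of_ne_zero hi0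
      simp only [Nat.succ_eq_add_one] at *
      refine ⟨i, j, ⟨by omega, h2, fun hB => hf ⟨?_, h2, fun hB' => ?_⟩⟩,
        fun z hz => ⟨⟨hz.1 ▸ D.stepX i, hz.1.le⟩, hz.2⟩, Or.inl ⟨i + 1, fun z hz => hz.1⟩⟩
      · rcases h1.lt_or_eq with h | h
        · exact h
        · have h6 := (D.hB _ hB).2.1
          simp only at h6
          have h7 := (div_bounds D.hK0 i).2
          have h8 := D.coarse_le (a := i / D.K + 1) (by omega)
          omega
      · by_cases hm : (i + 1) % D.K = 0
        · refine D.sep1 _ hB _ hB' ?_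
          exact Nat.succ_div_of_dvd (Nat.dvd_of_mod_eq_zero hm)
        · by_cases hj : j % D.K = 0
          · have := hmod hj
            exact h4 ⟨by rwa [succ_div_of_mod this], hm, this⟩
          · exact h3 ⟨hB', hm, hj⟩

end BlockGrid

/-! ### A grid with blocks is a subdivision of a 3-connected graph -/

namespace BlockGrid

variable {D : BlockGrid}

theorem adj_iff {i j i' j' : ℕ} (h : (D.X i, D.Y j) ∈ D.verts) (h' : (D.X i', D.Y j') ∈ D.verts) :
    D.graph.graph.Adj ⟨_, h⟩ ⟨_, h'⟩ ↔
      (j = j' ∧ (i' = i + 1 ∨ i = i' + 1)) ∨ (i = i' ∧ (j' = j + 1 ∨ j = j' + 1)) := by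
  have key : ∀ {i j i' j' : ℕ}, (D.X i, D.Y j) ∈ D.verts → (D.X i', D.Y j') ∈ D.verts →
      (((D.X i, D.Y j), (D.X i', D.Y j')) ∈ D.edges ↔
        (j = j' ∧ i' = i + 1) ∨ (i = i' ∧ j' = j + 1)) := by
    intro i j i' j' h h'
    rw [mem_verts] at h h'
    obtain ⟨a, b, h1, h2, h3, e⟩ := h
    obtain ⟨a', b', h1', h2', h3', e'⟩ := h'
    simp only [Prod.mk.injEq, D.hX.injective.eq_iff, D.hY.injective.eq_iff] at e e'
    obtain ⟨rfl, rfl⟩ := e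
    obtain ⟨rfl, rfl⟩ := e'
    rw [mem_edges]
    simp only [Prod.mk.injEq, D.hX.injective.eq_iff, D.hY.injective.eq_iff]
    constructor
    · rintro (⟨k, l, -, -, -, -, ⟨rfl, rfl⟩, rfl, rfl⟩ | ⟨k, l, -, -, -, -, ⟨rfl, rfl⟩, rfl, rfl⟩) <;>
        simp
    · rintro (⟨rfl, rfl⟩ | ⟨rfl, rfl⟩)
      · exact Or.inl ⟨i, j, h1', h2, h3, h3', ⟨rfl, rfl⟩, rfl, rfl⟩
      · exact Or.inr ⟨i, j, h1, h2', h3, h3', ⟨rfl, rfl⟩, rfl, rfl⟩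
  have e : D.graph.edges = D.edges := rfl
  have hne : ((⟨_, h⟩ : {p : Pt // p ∈ D.graph.verts}) ≠ ⟨_, h'⟩) ↔ ¬ (i = i' ∧ j = j') := by
    rw [ne_eq, Subtype.ext_iff, Prod.mk.injEq, D.hX.injective.eq_iff, D.hY.injective.eq_iff]
  rw [GridPlaneGraph.graph, SimpleGraph.fromRel_adj, hne, e, key h h', key h' h]
  omega

/-- The 3-connected graph arises by suppressing the four outer corners, the vertices of degree two
that are cut off from the rest of the grid by their two neighbours. -/
theorem exists_subdivision (D : BlockGrid) : ∃ (N : ℕ) (G₀ : SimpleGraph (Fin N)),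
    ThreeConnected G₀ ∧ IsSubdivisionOf D.graph.graph G₀ := by
  have hN := D.N_ge
  have hN0 : D.N % D.K = 0 := by unfold N; simp
  have hidx : ∀ w : {p : Pt // p ∈ D.graph.verts}, ∃ p : ℕ × ℕ,
      p.1 ≤ D.N ∧ p.2 ≤ D.N ∧ ¬ D.Hole p.1 p.2 ∧ w.1 = (D.X p.1, D.Y p.2) := by
    intro w
    obtain ⟨i, j, h⟩ := D.mem_verts.1 w.2
    exact ⟨(i, j), h⟩
  choose p hp1 hp2 hp3 hp using hidx
  have hadj : ∀ u v, D.graph.graph.Adj u v ↔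
      ((p u).2 = (p v).2 ∧ ((p v).1 = (p u).1 + 1 ∨ (p u).1 = (p v).1 + 1)) ∨
      ((p u).1 = (p v).1 ∧ ((p v).2 = (p u).2 + 1 ∨ (p u).2 = (p v).2 + 1)) := by
    intro u v
    have hu : (D.X (p u).1, D.Y (p u).2) ∈ D.verts := hp u ▸ u.2
    have hv : (D.X (p v).1, D.Y (p v).2) ∈ D.verts := hp v ▸ v.2
    have eu : u = ⟨_, hu⟩ := Subtype.ext (hp u)
    have ev : v = ⟨_, hv⟩ := Subtype.ext (hp v)
    rw [← adj_iff hu hv, ← eu, ← ev]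
  have heq : ∀ u v, u = v ↔ (p u).1 = (p v).1 ∧ (p u).2 = (p v).2 := by
    intro u v
    refine ⟨fun h => by simp [h], fun h => Subtype.ext ?_⟩
    rw [hp u, hp v, h.1, h.2]
  -- the vertex with given indices
  have hex : ∀ i j, i ≤ D.N → j ≤ D.N → ¬ D.Hole i j → ∃ w, (p w).1 = i ∧ (p w).2 = j := by
    intro i j h1 h2 h3
    have hw : (D.X i, D.Y j) ∈ D.graph.verts := D.mem_verts.2 ⟨i, j, h1, h2, h3, rfl⟩
    have := hp ⟨_, hw⟩
    simp only [Prod.mk.injEq, D.hX.injective.eq_iff, D.hY.injective.eq_iff] at this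
    exact ⟨⟨_, hw⟩, this.1.symm, this.2.symm⟩
  have hside : ∀ i j, (i = 0 ∨ i = D.N ∨ j = 0 ∨ j = D.N) → ¬ D.Hole i j := by
    rintro i j h ⟨-, hi, hj⟩
    rcases h with rfl | rfl | rfl | rfl <;> simp_all
  let C : Set {p : Pt // p ∈ D.graph.verts} :=
    {w | ((p w).1 = 0 ∨ (p w).1 = D.N) ∧ ((p w).2 = 0 ∨ (p w).2 = D.N)}
  have hC : ∀ w, w ∈ C ↔ ((p w).1 = 0 ∨ (p w).1 = D.N) ∧ ((p w).2 = 0 ∨ (p w).2 = D.N) :=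
    fun w => Iff.rfl
  have hCC : ∀ u ∈ C, ∀ v, D.graph.graph.Adj u v → v ∉ C := by
    intro u hu v huv
    rw [hC] at *
    rw [hadj] at huv
    omega
  have hfin : Finite {p : Pt // p ∈ D.graph.verts} := inferInstance
  refine exists_fin_graph _ (suppress D.graph.graph C)
    (suppress_threeConnected _ _ ?_ hCC ?_) (suppress_isSubdivisionOf _ _ ?_ ?_ ?_ ?_ ?_)
  · -- four vertices in the interior of the bottom side
    have hv : ∀ k : Fin 4, ∃ w, (p w).1 = k + 1 ∧ (p w).2 = 0 := fun k =>
      hex _ _ (by omega) (by omega) (hside _ _ (by omega))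
    choose f hf1 hf2 using hv
    have hfC : ∀ k, f k ∉ C := fun k => by
      have := hf1 k
      rw [hC]
      omega
    have hinj : Function.Injective (fun k => (⟨f k, hfC k⟩ : {w // w ∉ C})) := by
      intro k l h
      have h' : f k = f l := congrArg Subtype.val h
      have h1 := hf1 k
      have h2 := hf1 l
      rw [h'] at h1
      exact Fin.ext (by omega)
    simpa using Nat.card_le_card_of_injective _ hinj
  · intro S hS g hg u v huS hvS huC hvC
    -- the index pairs of the (at most two) deleted vertices
    obtain ⟨s, t, hst⟩ : ∃ s t : ℕ × ℕ, ∀ w, (p w ≠ s ∧ p w ≠ t) ↔ w ∉ S := by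
      have hpe : ∀ w a, p w = p a ↔ w = a := fun w a => by rw [heq, Prod.ext_iff]
      have hd : ∀ w, p w ≠ (D.N + 1, 0) := fun w h => by
        have := hp1 w
        rw [h] at this
        simp at this
      rcases (by omega : S.ncard = 0 ∨ S.ncard = 1 ∨ S.ncard = 2) with h | h | h
      · rw [Set.ncard_eq_zero] at h
        exact ⟨(D.N + 1, 0), (D.N + 1, 0), fun w => by simp [h, hd]⟩
      · obtain ⟨a, rfl⟩ := Set.ncard_eq_one.1 h
        exact ⟨p a, p a, fun w => by simp [hpe]⟩
      · obtain ⟨a, b, -, rfl⟩ := Set.ncard_eq_two.1 h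
        exact ⟨p a, p b, fun w => by simp [hpe]⟩
    let g' : ℕ → ℕ → Prop := fun i j => ∃ w, (p w).1 = i ∧ (p w).2 = j ∧ g w
    have hg' : ∀ w, g' (p w).1 (p w).2 ↔ g w := by
      intro w
      refine ⟨?_, fun h => ⟨w, rfl, rfl, h⟩⟩
      rintro ⟨w', h1, h2, h⟩
      rwa [← (heq w' w).2 ⟨h1, h2⟩]
    obtain ⟨κ, hκ⟩ := D.color s t g' (by
        intro i j h1 h2 h3 h4 h5 h6 h7 h8
        obtain ⟨w, e1, e2⟩ := hex i j h1.le h2 h3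
        obtain ⟨w', e1', e2'⟩ := hex (i + 1) j h1 h2 h4
        have q : p w = (i, j) := Prod.ext e1 e2
        have q' : p w' = (i + 1, j) := Prod.ext e1' e2'
        have r := hg' w
        have r' := hg' w'
        rw [e1, e2] at r
        rw [e1', e2'] at r'
        rw [r, r']
        exact hg _ _ ((hst w).1 (by rw [q]; exact ⟨h5, h6⟩)) ((hst w').1 (by rw [q']; exact ⟨h7, h8⟩))
          ((hadj _ _).2 (by omega))) (by
        intro i j h1 h2 h3 h4 h5 h6 h7 h8
        obtain ⟨w, e1, e2⟩ := hex i j (by omega) (by omega) h3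
        obtain ⟨w', e1', e2'⟩ := hex i (j + 1) (by omega) (by omega) h4
        have q : p w = (i, j) := Prod.ext e1 e2
        have q' : p w' = (i, j + 1) := Prod.ext e1' e2'
        have r := hg' w
        have r' := hg' w'
        rw [e1, e2] at r
        rw [e1', e2'] at r'
        rw [r, r']
        exact hg _ _ ((hst w).1 (by rw [q]; exact ⟨h5, h6⟩)) ((hst w').1 (by rw [q']; exact ⟨h7, h8⟩))
          ((hadj _ _).2 (by omega)))
    have fin : ∀ w, w ∉ S → w ∉ C → (g w ↔ κ) := by
      intro w hwS hwC
      have h := (hst w).2 hwS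
      rw [← hg' w]
      exact hκ _ _ (hp1 w) (hp2 w) (hp3 w) h.1 h.2 ((hC w).not.1 hwC)
    rw [fin u huS huC, fin v hvS hvC]
  · exact hCC
  · intro c hc u v hu hv huv
    rw [hC] at hc
    rw [hadj] at *
    omega
  · intro c hc u v w hu hv hw
    have := hp1 u; have := hp1 v; have := hp1 w
    have := hp2 u; have := hp2 v; have := hp2 w
    rw [hC] at hc
    rw [hadj] at *
    simp only [heq]
    omega
  · intro c hc
    rw [hC] at hc
    obtain ⟨u, hu1, hu2⟩ := hex (if (p c).1 = 0 then 1 else D.N - 1) (p c).2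
      (by split_ifs <;> omega) (hp2 c) (hside _ _ (by omega))
    obtain ⟨v, hv1, hv2⟩ := hex (p c).1 (if (p c).2 = 0 then 1 else D.N - 1)
      (hp1 c) (by split_ifs <;> omega) (hside _ _ (by omega))
    refine ⟨u, v, ?_, ?_, ?_⟩
    · rw [ne_eq, heq]; split_ifs at * <;> omega
    · rw [hadj]; split_ifs at * <;> omega
    · rw [hadj]; split_ifs at * <;> omega
  · intro c hc c' hc' u v huv h1 h2 h3 h4
    have := hp1 u; have := hp1 v
    have := hp2 u; have := hp2 v
    rw [hC] at hc hc'
    rw [ne_eq, heq] at huv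
    rw [hadj] at *
    rw [heq]
    omega

end BlockGrid

/-! ### Local structure of piecewise linear curves -/

/-- `AffOn` in vector notation, based at a point of the interval. -/
theorem AffOn.exists_dir {γ : ℝ → Pt} {a b : ℝ} (h : AffOn γ a b) :
    ∃ d : Pt, ∀ s ∈ Icc a b, ∀ x ∈ Icc a b, γ x = γ s + (x - s) • d := by
  obtain ⟨c, d, hd⟩ := h
  refine ⟨d, fun s hs x hx => ?_⟩
  rw [hd x hx, hd s hs]
  ext <;> simp <;> ring

theorem AffOn.continuousOn {γ : ℝ → Pt} {a b : ℝ} (h : AffOn γ a b) :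
    ContinuousOn γ (Icc a b) := by
  obtain ⟨c, d, hd⟩ := h
  refine ContinuousOn.congr (f := fun x => (c.1 + x * d.1, c.2 + x * d.2)) ?_ hd
  fun_prop

theorem exists_piece_right {n : ℕ} {t : Fin (n + 1) → ℝ} (h0 : t 0 = 0)
    (h1 : t (Fin.last n) = 1) {s : ℝ} (hs0 : 0 ≤ s) (hs1 : s < 1) :
    ∃ i : Fin n, t i.castSucc ≤ s ∧ s < t i.succ := by
  by_contra! h
  have : ∀ i, t i ≤ s := fun i => Fin.induction (by rwa [h0]) (fun i hi => h i hi) i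
  have := this (Fin.last n)
  linarith

theorem exists_piece_left {n : ℕ} {t : Fin (n + 1) → ℝ} (h0 : t 0 = 0)
    (h1 : t (Fin.last n) = 1) {s : ℝ} (hs0 : 0 < s) (hs1 : s ≤ 1) :
    ∃ i : Fin n, t i.castSucc < s ∧ s ≤ t i.succ := by
  by_contra! h
  have : ∀ i, t i < s := fun i => Fin.induction (by rwa [h0]) (fun i hi => h i hi) i
  have := this (Fin.last n)
  linarith

theorem exists_piece {n : ℕ} {t : Fin (n + 1) → ℝ} (h0 : t 0 = 0)
    (h1 : t (Fin.last n) = 1) {s : ℝ} (hs : s ∈ Icc (0 : ℝ) 1) :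
    ∃ i : Fin n, s ∈ Icc (t i.castSucc) (t i.succ) := by
  rcases hs.2.lt_or_eq with h | h
  · obtain ⟨i, hi⟩ := exists_piece_right h0 h1 hs.1 h
    exact ⟨i, hi.1, hi.2.le⟩
  · obtain ⟨i, hi⟩ := exists_piece_left h0 h1 (s := s) (by linarith) hs.2
    exact ⟨i, hi.1.le, hi.2⟩

theorem IsPLCurve.continuousOn {γ : ℝ → Pt} (h : IsPLCurve γ) : ContinuousOn γ (Icc 0 1) := by
  obtain ⟨n, -, t, h0, h1, -, haff⟩ := h
  refine ContinuousOn.mono (s := ⋃ i : Fin n, Icc (t i.castSucc) (t i.succ)) ?_ ?_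
  · exact (locallyFinite_of_finite _).continuousOn_iUnion (fun _ => isClosed_Icc)
      (fun i => (haff i).continuousOn)
  · exact fun s hs => mem_iUnion.2 (exists_piece h0 h1 hs)

theorem IsPLCurve.isCompact_im {γ : ℝ → Pt} (h : IsPLCurve γ) : IsCompact (Im γ) :=
  isCompact_Icc.image_of_continuousOn h.continuousOn

/-- On a simple curve, points close to `γ s` have parameters close to `s`. -/
theorem IsPLCurve.param_close {γ : ℝ → Pt} (h : IsPLCurve γ) {s ε : ℝ} (hs : s ∈ Icc (0 : ℝ) 1)
    (hε : 0 < ε) : ∃ r > 0, ∀ x ∈ Icc (0 : ℝ) 1, dist (γ x) (γ s) < r → |x - s| < ε := by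
  obtain ⟨n, hinj, -⟩ := id h
  have hc : IsCompact (γ '' (Icc 0 1 ∩ {x | ε ≤ |x - s|})) :=
    (isCompact_Icc.inter_right (isClosed_le (by fun_prop) (by fun_prop))).image_of_continuousOn
      (h.continuousOn.mono inter_subset_left)
  have hs' : γ s ∈ (γ '' (Icc 0 1 ∩ {x | ε ≤ |x - s|}))ᶜ := by
    rintro ⟨x, ⟨hx, hx'⟩, e⟩
    rw [hinj hx hs e] at hx'
    simp only [sub_self, abs_zero, mem_ofPred_eq] at hx'
    linarith
  obtain ⟨r, hr, hsub⟩ := Metric.isOpen_iff.1 hc.isClosed.isOpen_compl _ hs'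
  refine ⟨r, hr, fun x hx hd => ?_⟩
  by_contra! hx'
  exact hsub (mem_ball.2 hd) ⟨x, ⟨hx, hx'⟩, rfl⟩

/-- Near each of its points a piecewise linear curve consists of at most two rays. -/
theorem IsPLCurve.two_rays {γ : ℝ → Pt} (h : IsPLCurve γ) {p : Pt} (hp : p ∈ Im γ) :
    ∃ r > 0, ∃ d₁ d₂ : Pt, ∀ q ∈ Im γ, dist q p < r →
      ∃ τ : ℝ, 0 ≤ τ ∧ (q = p + τ • d₁ ∨ q = p + τ • d₂) := by
  obtain ⟨s, hs, rfl⟩ := hp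
  obtain ⟨n, hinj, t, h0, h1, -, haff⟩ := id h
  have hr : ∃ ε > 0, ∃ d : Pt, ∀ x ∈ Icc (0 : ℝ) 1, s ≤ x → x < s + ε → γ x = γ s + (x - s) • d := by
    rcases hs.2.lt_or_eq with h | h
    · obtain ⟨i, hi, hi'⟩ := exists_piece_right h0 h1 hs.1 h
      obtain ⟨d, hd⟩ := (haff i).exists_dir
      exact ⟨t i.succ - s, by linarith, d, fun x hx h1 h2 =>
        hd s ⟨hi, hi'.le⟩ x ⟨by linarith, by linarith⟩⟩
    · refine ⟨1, one_pos, 0, fun x hx h1 h2 => ?_⟩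
      rw [le_antisymm (h ▸ hx.2) h1]; simp
  have hl : ∃ ε > 0, ∃ d : Pt, ∀ x ∈ Icc (0 : ℝ) 1, x ≤ s → s - ε < x → γ x = γ s + (x - s) • d := by
    rcases hs.1.lt_or_eq with h | h
    · obtain ⟨i, hi, hi'⟩ := exists_piece_left h0 h1 h hs.2
      obtain ⟨d, hd⟩ := (haff i).exists_dir
      exact ⟨s - t i.castSucc, by linarith, d, fun x hx h1 h2 =>
        hd s ⟨hi.le, hi'⟩ x ⟨by linarith, by linarith⟩⟩
    · refine ⟨1, one_pos, 0, fun x hx h1 h2 => ?_⟩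
      rw [le_antisymm (h ▸ hx.1) h1]; simp
  obtain ⟨ε₁, hε₁, d₁, hd₁⟩ := hr
  obtain ⟨ε₂, hε₂, d₂, hd₂⟩ := hl
  obtain ⟨r, hr, hclose⟩ := h.param_close hs (lt_min hε₁ hε₂)
  refine ⟨r, hr, d₁, -d₂, ?_⟩
  rintro _ ⟨x, hx, rfl⟩ hd
  have := abs_lt.1 (hclose x hx hd)
  have m1 := min_le_left ε₁ ε₂
  have m2 := min_le_right ε₁ ε₂
  rcases le_total s x with hsx | hsx
  · exact ⟨x - s, by linarith, Or.inl (hd₁ x hx hsx (by linarith))⟩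
  · refine ⟨s - x, by linarith, Or.inr ?_⟩
    rw [hd₂ x hx hsx (by linarith), smul_neg, ← neg_smul, neg_sub]

/-- Away from finitely many break points a piecewise linear curve is locally a segment; moreover
a linear functional that is constant along this segment has an infinite fibre on the curve. -/
theorem IsPLCurve.exists_breaks {γ : ℝ → Pt} (h : IsPLCurve γ) :
    ∃ T : Set Pt, T.Finite ∧ T ⊆ Im γ ∧ γ 0 ∈ T ∧ γ 1 ∈ T ∧ ∀ p ∈ Im γ, p ∉ T →
      ∃ r > 0, ∃ d : Pt, d ≠ 0 ∧ (∀ q ∈ Im γ, dist q p < r → ∃ τ : ℝ, q = p + τ • d) ∧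
        ∀ f : Pt →ₗ[ℝ] ℝ, f d = 0 → {z ∈ Im γ | f z = f p}.Infinite := by
  obtain ⟨n, hinj, t, h0, h1, hmono, haff⟩ := id h
  have ht : ∀ i, t i ∈ Icc (0 : ℝ) 1 := fun i =>
    ⟨h0 ▸ hmono (Fin.zero_le i), h1 ▸ hmono (Fin.le_last i)⟩
  refine ⟨range (γ ∘ t), finite_range _, ?_, ⟨0, by simp [h0]⟩, ⟨Fin.last n, by simp [h1]⟩, ?_⟩
  · rintro _ ⟨i, rfl⟩
    exact ⟨t i, ht i, rfl⟩
  rintro _ ⟨s, hs, rfl⟩ hnot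
  have hne : ∀ i, s ≠ t i := by
    rintro i rfl
    exact hnot ⟨i, rfl⟩
  obtain ⟨i, hi, hi'⟩ := exists_piece h0 h1 hs
  replace hi := lt_of_le_of_ne hi (hne _).symm
  replace hi' := lt_of_le_of_ne hi' (hne _)
  obtain ⟨d, hd⟩ := (haff i).exists_dir
  have hsI : s ∈ Icc (t i.castSucc) (t i.succ) := ⟨hi.le, hi'.le⟩
  obtain ⟨r, hr, hclose⟩ := h.param_close hs
    (lt_min (sub_pos.2 hi) (sub_pos.2 hi'))
  have m1 := min_le_left (s - t i.castSucc) (t i.succ - s)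
  have m2 := min_le_right (s - t i.castSucc) (t i.succ - s)
  have hsub : Icc (t i.castSucc) (t i.succ) ⊆ Icc 0 1 := Icc_subset_Icc (ht _).1 (ht _).2
  refine ⟨r, hr, d, ?_, ?_, ?_⟩
  · rintro rfl
    have e := hd s hsI (t i.castSucc) ⟨le_rfl, (hi.trans hi').le⟩
    rw [smul_zero, add_zero] at e
    exact hne _ (hinj (ht _) hs e).symm
  · rintro _ ⟨x, hx, rfl⟩ hdist
    have := abs_lt.1 (hclose x hx hdist)
    exact ⟨x - s, hd s hsI x ⟨by linarith, by linarith⟩⟩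
  · intro f hf
    refine ((Icc_infinite (hi.trans hi')).image (hinj.mono hsub)).mono ?_
    rintro _ ⟨x, hx, rfl⟩
    refine ⟨⟨x, hsub hx, rfl⟩, ?_⟩
    rw [hd s hsI x hx, map_add, map_smul, hf, smul_zero, add_zero]

/-- Only finitely many level lines of a linear functional contain infinitely many points of a
piecewise linear curve. -/
theorem IsPLCurve.finite_infinite_fibres {γ : ℝ → Pt} (h : IsPLCurve γ) (f : Pt →ₗ[ℝ] ℝ) :
    {c : ℝ | {z ∈ Im γ | f z = c}.Infinite}.Finite := by
  obtain ⟨n, hinj, t, h0, h1, hmono, haff⟩ := id h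
  refine (finite_range (fun i => f (γ (t i)))).subset ?_
  intro c hc
  by_contra hnot
  refine hc ?_
  have hsub : {z ∈ Im γ | f z = c} ⊆
      ⋃ i : Fin n, γ '' {x ∈ Icc (t i.castSucc) (t i.succ) | f (γ x) = c} := by
    rintro _ ⟨⟨x, hx, rfl⟩, hz⟩
    obtain ⟨i, hi⟩ := exists_piece h0 h1 hx
    exact mem_iUnion.2 ⟨i, x, ⟨hi, hz⟩, rfl⟩
  refine (finite_iUnion fun i => Finite.image _ (Subsingleton.finite ?_)).subset hsub
  obtain ⟨d, hd⟩ := (haff i).exists_dir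
  rintro x ⟨hx, ex⟩ y ⟨hy, ey⟩
  have hle : t i.castSucc ≤ t i.succ := hx.1.trans hx.2
  have e := hd x hx y hy
  have e' := hd x hx _ ⟨le_rfl, hle⟩
  apply_fun f at e e'
  rw [map_add, map_smul, ex, smul_eq_mul] at e e'
  rw [ey] at e
  have : f d ≠ 0 := by
    intro hf
    rw [hf, mul_zero, add_zero] at e'
    exact hnot ⟨_, e'⟩
  have : (y - x) * f d = 0 := by linarith
  rcases mul_eq_zero.1 this with h | h
  · linarith
  · contradiction

/-! ### The properties of a sufficiently fine and generic grid -/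

/-- A line meeting the boundary of a rectangle in three points contains a side of it. -/
theorem line_onRect {x₁ x₂ y₁ y₂ : ℝ} {q d : Pt} {τ₁ τ₂ τ₃ : ℝ}
    (h1 : OnRect x₁ x₂ y₁ y₂ (q + τ₁ • d)) (h2 : OnRect x₁ x₂ y₁ y₂ (q + τ₂ • d))
    (h3 : OnRect x₁ x₂ y₁ y₂ (q + τ₃ • d)) (n1 : τ₁ ≠ τ₂) (n2 : τ₁ ≠ τ₃) (n3 : τ₂ ≠ τ₃) :
    (d.1 = 0 ∧ (q.1 = x₁ ∨ q.1 = x₂)) ∨ (d.2 = 0 ∧ (q.2 = y₁ ∨ q.2 = y₂)) := by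
  have key : ∀ {s t u : ℝ}, s < t → t < u → OnRect x₁ x₂ y₁ y₂ (q + s • d) →
      OnRect x₁ x₂ y₁ y₂ (q + t • d) → OnRect x₁ x₂ y₁ y₂ (q + u • d) →
      (d.1 = 0 ∧ (q.1 = x₁ ∨ q.1 = x₂)) ∨ (d.2 = 0 ∧ (q.2 = y₁ ∨ q.2 = y₂)) := by
    intro s t u hst htu h1 h2 h3
    have lo : ∀ {a c m : ℝ}, m ≤ a + s * c → a + t * c = m → m ≤ a + u * c → c = 0 ∧ a = m := by
      intro a c m h1 h2 h3
      have hc : c = 0 := by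
        by_contra hc
        rcases lt_or_gt_of_ne hc with hc | hc
        · linarith [mul_neg_of_pos_of_neg (sub_pos.2 htu) hc]
        · linarith [mul_pos (sub_pos.2 hst) hc]
      subst hc
      exact ⟨rfl, by linarith⟩
    have hi : ∀ {a c m : ℝ}, a + s * c ≤ m → a + t * c = m → a + u * c ≤ m → c = 0 ∧ a = m := by
      intro a c m h1 h2 h3
      have hc : c = 0 := by
        by_contra hc
        rcases lt_or_gt_of_ne hc with hc | hc
        · linarith [mul_neg_of_pos_of_neg (sub_pos.2 hst) hc]
        · linarith [mul_pos (sub_pos.2 htu) hc]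
      subst hc
      exact ⟨rfl, by linarith⟩
    simp only [OnRect, Prod.fst_add, Prod.snd_add, Prod.smul_fst, Prod.smul_snd,
      smul_eq_mul] at h1 h2 h3
    rcases h2.2 with h | h | h | h
    · have := lo h1.1.1 h h3.1.1
      exact Or.inl ⟨this.1, Or.inl this.2⟩
    · have := hi h1.1.2.1 h h3.1.2.1
      exact Or.inl ⟨this.1, Or.inr this.2⟩
    · have := lo h1.1.2.2.1 h h3.1.2.2.1
      exact Or.inr ⟨this.1, Or.inl this.2⟩
    · have := hi h1.1.2.2.2 h h3.1.2.2.2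
      exact Or.inr ⟨this.1, Or.inr this.2⟩
  rcases lt_or_gt_of_ne n1 with a | a <;> rcases lt_or_gt_of_ne n2 with b | b <;>
    rcases lt_or_gt_of_ne n3 with c | c
  · exact key a c h1 h2 h3
  · exact key b c h1 h3 h2
  · linarith
  · exact key b a h3 h1 h2
  · exact key a b h2 h1 h3
  · linarith
  · exact key c b h2 h3 h1
  · exact key c a h3 h2 h1

/-- A ray starting inside a rectangle meets its boundary at most once. -/
theorem ray_onRect {x₁ x₂ y₁ y₂ : ℝ} {p d : Pt} {τ τ' : ℝ}
    (hp : p ∈ Ioo x₁ x₂ ×ˢ Ioo y₁ y₂) (h0 : 0 ≤ τ) (h0' : 0 ≤ τ')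
    (h : OnRect x₁ x₂ y₁ y₂ (p + τ • d)) (h' : OnRect x₁ x₂ y₁ y₂ (p + τ' • d)) : τ = τ' := by
  have key : ∀ {s t : ℝ}, 0 ≤ s → OnRect x₁ x₂ y₁ y₂ (p + s • d) →
      OnRect x₁ x₂ y₁ y₂ (p + t • d) → ¬ s < t := by
    intro s t hs h h' hst
    obtain ⟨⟨p1, p2⟩, ⟨p3, p4⟩⟩ := hp
    have lo : ∀ {a c m : ℝ}, m < a → a + s * c = m → m ≤ a + t * c → False := by
      intro a c m h1 h2 h3
      have : c < 0 := by
        by_contra! hc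
        have := mul_nonneg hs hc
        linarith
      nlinarith
    have hi : ∀ {a c m : ℝ}, a < m → a + s * c = m → a + t * c ≤ m → False := by
      intro a c m h1 h2 h3
      have : 0 < c := by
        by_contra! hc
        have := mul_nonpos_of_nonneg_of_nonpos hs hc
        linarith
      nlinarith
    simp only [OnRect, Prod.fst_add, Prod.snd_add, Prod.smul_fst, Prod.smul_snd,
      smul_eq_mul] at h h'
    rcases h.2 with e | e | e | e
    · exact lo p1 e h'.1.1
    · exact hi p2 e h'.1.2.1
    · exact lo p3 e h'.1.2.2.1
    · exact hi p4 e h'.1.2.2.2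
  rcases lt_trichotomy τ τ' with a | a | a
  · exact (key h0 h h' a).elim
  · exact a
  · exact (key h0' h' h a).elim

namespace BlockGrid

/-- The closed fine cell with lower left corner `(X i, Y j)`. -/
def cell (D : BlockGrid) (i j : ℕ) : Set Pt :=
  Icc (D.X i) (D.X (i + 1)) ×ˢ Icc (D.Y j) (D.Y (j + 1))

/-- The open block with coarse index `(a, b)`. -/
def openBlock (D : BlockGrid) (a b : ℕ) : Set Pt :=
  Ioo (D.X (a * D.K)) (D.X ((a + 1) * D.K)) ×ˢ Ioo (D.Y (b * D.K)) (D.Y ((b + 1) * D.K))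

/-- The closed block with coarse index `(a, b)`. -/
def closedBlock (D : BlockGrid) (a b : ℕ) : Set Pt :=
  Icc (D.X (a * D.K)) (D.X ((a + 1) * D.K)) ×ˢ Icc (D.Y (b * D.K)) (D.Y ((b + 1) * D.K))

/-- A grid with blocks is adapted to a family of curves `R` and a finite set `S` of points on
them: the curves are inside the frame and avoid the vertices, the points of `S` are off the
grid lines, in each closed fine cell the curves look like a part of one line that is not a grid
line, and each block contains at most one point of `S`, while every curve seen in it passes through
a common centre and consists there of at most two rays from that centre. -/
structure Adapted (D : BlockGrid) {V : Type} (R : V → ℝ → Pt) (S : Set Pt) : Prop where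
  inFrame : ∀ v, ∀ z ∈ Im (R v), D.X 0 < z.1 ∧ z.1 < D.X D.N ∧ D.Y 0 < z.2 ∧ z.2 < D.Y D.N
  vert : ∀ v i j, (D.X i, D.Y j) ∉ Im (R v)
  sub : ∀ p ∈ S, ∃ v, p ∈ Im (R v)
  offLines : ∀ p ∈ S, ∀ k, p.1 ≠ D.X k ∧ p.2 ≠ D.Y k
  fineS : ∀ i j, D.IsFine i j → ∀ p ∈ S, p ∉ D.cell i j
  fineOne : ∀ i j, D.IsFine i j → ∀ u v, ∀ x ∈ Im (R u), ∀ y ∈ Im (R v), x ∈ D.cell i j →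
    y ∈ D.cell i j → u = v
  fineLine : ∀ i j, D.IsFine i j → ∃ q d : Pt, d ≠ 0 ∧ (d.1 = 0 → ∀ k, q.1 ≠ D.X k) ∧
    (d.2 = 0 → ∀ k, q.2 ≠ D.Y k) ∧
    ∀ v, ∀ x ∈ Im (R v), x ∈ D.cell i j → ∃ τ : ℝ, x = q + τ • d
  block : ∀ a b, (a, b) ∈ D.B → ∃ p, p ∈ D.openBlock a b ∧ (∀ p' ∈ S, p' ∈ D.openBlock a b → p' = p) ∧
    ∀ v, ∃ d₁ d₂ : Pt, ∀ x ∈ Im (R v), x ∈ D.closedBlock a b → p ∈ Im (R v) ∧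
      ∃ τ : ℝ, 0 ≤ τ ∧ (x = p + τ • d₁ ∨ x = p + τ • d₂)

namespace Adapted

variable {D : BlockGrid} {V : Type} {R : V → ℝ → Pt} {S : Set Pt}

theorem frame_mem (h : D.Adapted R S) {v : V} {z : Pt} (hz : z ∈ Im (R v)) : z ∈ D.frame := by
  obtain ⟨h1, h2, h3, h4⟩ := h.inFrame v z hz
  exact ⟨⟨h1.le, h2.le⟩, ⟨h3.le, h4.le⟩⟩

/-- The three kinds of faces: fine cells, blocks and the outer face. -/
theorem face_cases' {F : Set Pt} (hF : D.graph.IsFace F) :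
    (∃ i j, D.IsFine i j ∧ F = Ioo (D.X i) (D.X (i + 1)) ×ˢ Ioo (D.Y j) (D.Y (j + 1))) ∨
    (∃ a b, (a, b) ∈ D.B ∧ F = D.openBlock a b) ∨
    ((∀ z ∈ F, z ∉ D.frame) ∧ ¬ Bornology.IsBounded F) := by
  rcases face_cases hF with ⟨i₁, i₂, j₁, j₂, h, rfl⟩ | h
  · rcases h with ⟨h, rfl, rfl⟩ | ⟨a, b, h, rfl, rfl, rfl, rfl⟩
    · exact Or.inl ⟨_, _, h, rfl⟩
    · exact Or.inr (Or.inl ⟨a, b, h, rfl⟩)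
  · exact Or.inr (Or.inr h)

theorem Ioo_subset_cell (i j : ℕ) :
    Ioo (D.X i) (D.X (i + 1)) ×ˢ Ioo (D.Y j) (D.Y (j + 1)) ⊆ D.cell i j :=
  prod_mono Ioo_subset_Icc_self Ioo_subset_Icc_self

theorem openBlock_subset (a b : ℕ) : D.openBlock a b ⊆ D.closedBlock a b :=
  prod_mono Ioo_subset_Icc_self Ioo_subset_Icc_self

/-- A face containing a point of `S` is a block. -/
theorem special_face (h : D.Adapted R S) {F : Set Pt} (hF : D.graph.IsFace F)
    (hne : (F ∩ S).Nonempty) : ∃ a b, (a, b) ∈ D.B ∧ F = D.openBlock a b := by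
  obtain ⟨p, hpF, hpS⟩ := hne
  rcases face_cases' hF with ⟨i, j, hf, rfl⟩ | h' | h'
  · exact (h.fineS i j hf p hpS (Ioo_subset_cell i j hpF)).elim
  · exact h'
  · obtain ⟨v, hv⟩ := h.sub p hpS
    exact (h'.1 p hpF (h.frame_mem hv)).elim

theorem unbounded_face (h : D.Adapted R S) {F : Set Pt} (hF : D.graph.IsFace F)
    (hb : ¬ Bornology.IsBounded F) (v : V) : F ∩ Im (R v) = ∅ := by
  rcases face_cases hF with ⟨i₁, i₂, j₁, j₂, -, rfl⟩ | h'
  · exact (hb ((isBounded_Ioo _ _).prod (isBounded_Ioo _ _))).elim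
  · ext z
    simp only [mem_inter_iff, mem_empty_iff_false, iff_false, not_and]
    exact fun hz hz' => h'.1 z hz (h.frame_mem hz')

theorem special_closures (h : D.Adapted R S) {F₁ F₂ : Set Pt} (hF₁ : D.graph.IsFace F₁)
    (hF₂ : D.graph.IsFace F₂) (hne : F₁ ≠ F₂) (h₁ : (F₁ ∩ S).Nonempty) (h₂ : (F₂ ∩ S).Nonempty) :
    closure F₁ ∩ closure F₂ = ∅ := by
  obtain ⟨a, b, hab, rfl⟩ := h.special_face hF₁ h₁
  obtain ⟨a', b', hab', rfl⟩ := h.special_face hF₂ h₂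
  have sub : ∀ a b, closure (D.openBlock a b) ⊆ D.closedBlock a b := fun a b =>
    closure_minimal (openBlock_subset a b) (isClosed_Icc.prod isClosed_Icc)
  have s1 := D.sep1 _ hab _ hab'
  have s1' := D.sep1 _ hab' _ hab
  have s2 := D.sep2 _ hab _ hab'
  have s2' := D.sep2 _ hab' _ hab
  simp only at s1 s1' s2 s2'
  have sep : ∀ (f : ℕ → ℝ), StrictMono f → ∀ {c c' : ℕ} {x : ℝ}, x ≤ f ((c + 1) * D.K) →
      f (c' * D.K) ≤ x → c' < c + 2 := by
    intro f hf c c' x hx hx'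
    have := hf.le_iff_le.1 (hx'.trans hx)
    have := Nat.le_of_mul_le_mul_right this D.hK0
    omega
  ext z
  simp only [mem_inter_iff, mem_empty_iff_false, iff_false, not_and]
  intro hz hz'
  obtain ⟨⟨x1, x2⟩, ⟨y1, y2⟩⟩ := sub _ _ hz
  obtain ⟨⟨x1', x2'⟩, ⟨y1', y2'⟩⟩ := sub _ _ hz'
  have e1 := sep _ D.hX x2 x1'
  have e2 := sep _ D.hX x2' x1
  have e3 := sep _ D.hY y2 y1'
  have e4 := sep _ D.hY y2' y1
  have ea : a = a' := by omega
  have eb : b = b' := by omega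
  exact hne (by rw [ea, eb])

theorem edge_subsingleton (h : D.Adapted R S) {e : Pt × Pt} (he : e ∈ D.graph.edges) :
    (segment ℝ e.1 e.2 ∩ ⋃ v : V, Im (R v)).Subsingleton := by
  obtain ⟨i, j, hf, hcell, hline⟩ := edge_in_fine he
  obtain ⟨q, d, -, h1, h2, hqd⟩ := h.fineLine i j hf
  rintro x ⟨hx, hxC⟩ y ⟨hy, hyC⟩
  obtain ⟨u, hu⟩ := mem_iUnion.1 hxC
  obtain ⟨v, hv⟩ := mem_iUnion.1 hyC
  obtain ⟨τ, rfl⟩ := hqd u x hu (hcell x hx)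
  obtain ⟨τ', rfl⟩ := hqd v y hv (hcell y hy)
  by_cases hτ : τ = τ'
  · rw [hτ]
  exfalso
  rcases hline with ⟨k, hk⟩ | ⟨k, hk⟩
  · have e1 := hk _ hx
    have e2 := hk _ hy
    simp only [Prod.fst_add, Prod.smul_fst, smul_eq_mul] at e1 e2
    have e3 : (τ - τ') * d.1 = 0 := by linarith
    have e4 := (mul_eq_zero.1 e3).resolve_left (sub_ne_zero.2 hτ)
    rw [e4, mul_zero, add_zero] at e1
    exact h1 e4 k e1
  · have e1 := hk _ hx
    have e2 := hk _ hy
    simp only [Prod.snd_add, Prod.smul_snd, smul_eq_mul] at e1 e2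
    have e3 : (τ - τ') * d.2 = 0 := by linarith
    have e4 := (mul_eq_zero.1 e3).resolve_left (sub_ne_zero.2 hτ)
    rw [e4, mul_zero, add_zero] at e1
    exact h2 e4 k e1

/-- Two curves meeting a face have a common point in it. -/
theorem face_two_curves (h : D.Adapted R S) {F : Set Pt} (hF : D.graph.IsFace F) :
    (∀ u v, (F ∩ Im (R u)).Nonempty → (F ∩ Im (R v)).Nonempty → u = v) ∨
    ∃ p ∈ F, ∀ u, (F ∩ Im (R u)).Nonempty → p ∈ Im (R u) := by
  rcases face_cases' hF with ⟨i, j, hf, rfl⟩ | ⟨a, b, hab, rfl⟩ | h'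
  · refine Or.inl fun u v ⟨x, hx, hx'⟩ ⟨y, hy, hy'⟩ => ?_
    exact h.fineOne i j hf u v x hx' y hy' (Ioo_subset_cell _ _ hx) (Ioo_subset_cell _ _ hy)
  · obtain ⟨p, hp, -, hst⟩ := h.block a b hab
    refine Or.inr ⟨p, hp, fun u ⟨x, hx, hx'⟩ => ?_⟩
    obtain ⟨d₁, d₂, hd⟩ := hst u
    exact (hd x hx' (openBlock_subset _ _ hx)).1
  · refine Or.inl fun u v ⟨x, hx, hx'⟩ _ => ?_
    exact (h'.1 x hx (h.frame_mem hx')).elim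

theorem boundary_le_two (h : D.Adapted R S) {F : Set Pt} (hF : D.graph.IsFace F) (v : V)
    {x y z : Pt} (hx : x ∈ Im (R v) ∩ frontier F) (hy : y ∈ Im (R v) ∩ frontier F)
    (hz : z ∈ Im (R v) ∩ frontier F) : x = y ∨ x = z ∨ y = z := by
  rcases face_cases' hF with ⟨i, j, hf, rfl⟩ | ⟨a, b, hab, rfl⟩ | h'
  · have sx : D.X i < D.X (i + 1) := D.hX (Nat.lt_succ_self i)
    have sy : D.Y j < D.Y (j + 1) := D.hY (Nat.lt_succ_self j)
    have rx := onRect_of_frontier_Ioo sx sy hx.2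
    have ry := onRect_of_frontier_Ioo sx sy hy.2
    have rz := onRect_of_frontier_Ioo sx sy hz.2
    have mem : ∀ {w : Pt}, OnRect (D.X i) (D.X (i + 1)) (D.Y j) (D.Y (j + 1)) w → w ∈ D.cell i j :=
      fun hw => ⟨⟨hw.1.1, hw.1.2.1⟩, hw.1.2.2⟩
    obtain ⟨q, d, -, h1, h2, hqd⟩ := h.fineLine i j hf
    obtain ⟨τ₁, rfl⟩ := hqd v x hx.1 (mem rx)
    obtain ⟨τ₂, rfl⟩ := hqd v y hy.1 (mem ry)
    obtain ⟨τ₃, rfl⟩ := hqd v z hz.1 (mem rz)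
    by_contra! hne
    rcases line_onRect rx ry rz (fun e => hne.1 (by rw [e])) (fun e => hne.2.1 (by rw [e]))
      (fun e => hne.2.2 (by rw [e])) with ⟨e, e' | e'⟩ | ⟨e, e' | e'⟩
    · exact h1 e _ e'
    · exact h1 e _ e'
    · exact h2 e _ e'
    · exact h2 e _ e'
  · have hK := D.hK0
    have sx : D.X (a * D.K) < D.X ((a + 1) * D.K) := D.hX (by rw [add_mul]; omega)
    have sy : D.Y (b * D.K) < D.Y ((b + 1) * D.K) := D.hY (by rw [add_mul]; omega)
    have rx := onRect_of_frontier_Ioo sx sy hx.2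
    have ry := onRect_of_frontier_Ioo sx sy hy.2
    have rz := onRect_of_frontier_Ioo sx sy hz.2
    have mem : ∀ {w : Pt}, OnRect (D.X (a * D.K)) (D.X ((a + 1) * D.K)) (D.Y (b * D.K))
        (D.Y ((b + 1) * D.K)) w → w ∈ D.closedBlock a b :=
      fun hw => ⟨⟨hw.1.1, hw.1.2.1⟩, hw.1.2.2⟩
    obtain ⟨p, hp, -, hst⟩ := h.block a b hab
    obtain ⟨d₁, d₂, hd⟩ := hst v
    obtain ⟨-, τ₁, n1, e1⟩ := hd x hx.1 (mem rx)
    obtain ⟨-, τ₂, n2, e2⟩ := hd y hy.1 (mem ry)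
    obtain ⟨-, τ₃, n3, e3⟩ := hd z hz.1 (mem rz)
    -- two of the three points are on the same ray
    have ray : ∀ {d w w' : Pt} {τ τ' : ℝ}, 0 ≤ τ → 0 ≤ τ' → w = p + τ • d → w' = p + τ' • d →
        OnRect (D.X (a * D.K)) (D.X ((a + 1) * D.K)) (D.Y (b * D.K)) (D.Y ((b + 1) * D.K)) w →
        OnRect (D.X (a * D.K)) (D.X ((a + 1) * D.K)) (D.Y (b * D.K)) (D.Y ((b + 1) * D.K)) w' →
        w = w' := by
      rintro d _ _ τ τ' h0 h0' rfl rfl hw hw'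
      rw [ray_onRect hp h0 h0' hw hw']
    rcases e1 with e1 | e1 <;> rcases e2 with e2 | e2
    · exact Or.inl (ray n1 n2 e1 e2 rx ry)
    · rcases e3 with e3 | e3
      · exact Or.inr (Or.inl (ray n1 n3 e1 e3 rx rz))
      · exact Or.inr (Or.inr (ray n2 n3 e2 e3 ry rz))
    · rcases e3 with e3 | e3
      · exact Or.inr (Or.inr (ray n2 n3 e2 e3 ry rz))
      · exact Or.inr (Or.inl (ray n1 n3 e1 e3 rx rz))
    · exact Or.inl (ray n1 n2 e1 e2 rx ry)
  · -- the curves stay in the open frame, which is disjoint from the closure of the outer face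
    exfalso
    obtain ⟨h1, h2, h3, h4⟩ := h.inFrame v x hx.1
    have ho : IsOpen (Ioo (D.X 0) (D.X D.N) ×ˢ Ioo (D.Y 0) (D.Y D.N)) := isOpen_Ioo.prod isOpen_Ioo
    obtain ⟨w, hw, hwF⟩ := mem_closure_iff.1 (frontier_subset_closure hx.2) _ ho
      ⟨⟨h1, h2⟩, ⟨h3, h4⟩⟩
    exact h'.1 w hwF (prod_mono Ioo_subset_Icc_self Ioo_subset_Icc_self hw)

end Adapted

end BlockGrid

/-! ### Local structure of a proper representation -/

theorem exists_pos_forall_lt {ι : Type*} [Finite ι] {r : ι → ℝ} (h : ∀ i, 0 < r i) :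
    ∃ δ > 0, ∀ i, δ < r i := by
  have h1 : ∀ᶠ δ in nhdsWithin (0 : ℝ) (Ioi 0), ∀ i, δ < r i :=
    Filter.eventually_all.2 fun i =>
      Filter.mem_of_superset (Ioo_mem_nhdsGT (h i)) fun _ hx => hx.2
  obtain ⟨δ, h2, h3⟩ := (h1.and self_mem_nhdsWithin).exists
  exact ⟨δ, h3, h2⟩

theorem IsPLCurve.exists_ball_disjoint {γ : ℝ → Pt} (h : IsPLCurve γ) {p : Pt} (hp : p ∉ Im γ) :
    ∃ r > 0, ∀ x ∈ Im γ, ¬ dist x p < r := by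
  obtain ⟨r, hr, hsub⟩ := Metric.isOpen_iff.1 h.isCompact_im.isClosed.isOpen_compl p hp
  exact ⟨r, hr, fun x hx hd => hsub (mem_ball.2 hd) hx⟩

/-- Every point has a neighbourhood in which each curve that appears there passes through the
point and consists of at most two rays. -/
theorem exists_star {V : Type} [Finite V] {R : V → ℝ → Pt} (hPL : ∀ v, IsPLCurve (R v)) (p : Pt) :
    ∃ r > 0, ∀ v, ∃ d₁ d₂ : Pt, ∀ x ∈ Im (R v), dist x p < r → p ∈ Im (R v) ∧
      ∃ τ : ℝ, 0 ≤ τ ∧ (x = p + τ • d₁ ∨ x = p + τ • d₂) := by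
  have h : ∀ v, ∃ r > 0, ∃ d₁ d₂ : Pt, ∀ x ∈ Im (R v), dist x p < r → p ∈ Im (R v) ∧
      ∃ τ : ℝ, 0 ≤ τ ∧ (x = p + τ • d₁ ∨ x = p + τ • d₂) := by
    intro v
    by_cases hp : p ∈ Im (R v)
    · obtain ⟨r, hr, d₁, d₂, hd⟩ := (hPL v).two_rays hp
      exact ⟨r, hr, d₁, d₂, fun x hx hd' => ⟨hp, hd x hx hd'⟩⟩
    · obtain ⟨r, hr, hd⟩ := (hPL v).exists_ball_disjoint hp
      exact ⟨r, hr, 0, 0, fun x hx hd' => (hd x hx hd').elim⟩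
  choose r hr d₁ d₂ hd using h
  obtain ⟨δ, hδ, hδr⟩ := exists_pos_forall_lt hr
  exact ⟨δ, hδ, fun v => ⟨d₁ v, d₂ v, fun x hx hx' => hd v x hx (hx'.trans (hδr v))⟩⟩

/-- Near a point that is neither a break point nor an intersection point, only one curve is
visible, and it is contained in a line; if that line is parallel to the kernel of a functional `f`,
then its level line contains infinitely many points of the curves, so a generic grid avoids it. -/
theorem exists_regular {V : Type} [Finite V] {R : V → ℝ → Pt} (hPL : ∀ v, IsPLCurve (R v))
    (hfin : (InPts R).Finite) :
    ∃ S : Set Pt, S.Finite ∧ SpecialPts R ⊆ S ∧ (∀ p ∈ S, ∃ v, p ∈ Im (R v)) ∧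
      ∀ p, p ∉ S → (∃ v, p ∈ Im (R v)) → ∃ r > 0, ∃ d : Pt, d ≠ 0 ∧
        (∀ u v, ∀ x ∈ Im (R u), ∀ y ∈ Im (R v), dist x p < r → dist y p < r → u = v) ∧
        (∀ v, ∀ x ∈ Im (R v), dist x p < r → ∃ τ : ℝ, x = p + τ • d) ∧
        ∀ f : Pt →ₗ[ℝ] ℝ, f d = 0 → {z ∈ ⋃ v, Im (R v) | f z = f p}.Infinite := by
  choose T hTfin hTsub hT0 hT1 hT using fun v => (hPL v).exists_breaks
  refine ⟨(⋃ v, T v) ∪ InPts R, (finite_iUnion hTfin).union hfin, ?_, ?_, ?_⟩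
  · rintro z (⟨v, rfl | rfl⟩ | ⟨v, hz, hb⟩ | hz)
    · exact Or.inl (mem_iUnion.2 ⟨v, hT0 v⟩)
    · exact Or.inl (mem_iUnion.2 ⟨v, hT1 v⟩)
    · left
      by_contra hne
      obtain ⟨r, hr, d, hd, hline, -⟩ := hT v z hz fun h => hne (mem_iUnion.2 ⟨v, h⟩)
      refine hb r hr ⟨_, ⟨z, d, hd, rfl⟩, ?_⟩
      rintro x ⟨hx, hx'⟩
      obtain ⟨τ, rfl⟩ := hline x hx (mem_ball.1 hx')
      exact ⟨τ, by ext <;> simp⟩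
    · exact Or.inr hz
  · rintro p (hp | ⟨u, v, -, hp, -⟩)
    · obtain ⟨v, hv⟩ := mem_iUnion.1 hp
      exact ⟨v, hTsub v hv⟩
    · exact ⟨u, hp⟩
  · rintro p hpS ⟨v, hv⟩
    obtain ⟨r, hr, d, hd, hline, hinf⟩ := hT v p hv fun h => hpS (Or.inl (mem_iUnion.2 ⟨v, h⟩))
    have h : ∀ w, ∃ ρ > 0, ∀ x ∈ Im (R w), dist x p < ρ → w = v := by
      intro w
      by_cases hw : w = v
      · exact ⟨1, one_pos, fun _ _ _ => hw⟩
      · obtain ⟨ρ, hρ, hd⟩ := (hPL w).exists_ball_disjoint (p := p)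
          fun hp => hpS (Or.inr ⟨w, v, hw, hp, hv⟩)
        exact ⟨ρ, hρ, fun x hx hx' => (hd x hx hx').elim⟩
    choose ρ hρ hρ' using h
    obtain ⟨ε, hε, hερ⟩ := exists_pos_forall_lt hρ
    have only : ∀ w, ∀ x ∈ Im (R w), dist x p < min r ε → w = v := fun w x hx hx' =>
      hρ' w x hx ((hx'.trans_le (min_le_right _ _)).trans (hερ w))
    refine ⟨min r ε, lt_min hr hε, d, hd, ?_, ?_, ?_⟩
    · intro u w x hx y hy hx' hy'
      rw [only u x hx hx', only w y hy hy']
    · intro w x hx hx'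
      have := only w x hx hx'
      subst this
      exact hline x hx (hx'.trans_le (min_le_left _ _))
    · intro f hf
      exact (hinf f hf).mono fun z hz => ⟨mem_iUnion.2 ⟨v, hz.1⟩, hz.2⟩

/-! ### Choice of the grid -/

theorem exists_generic_shift {E : Set ℝ} (hE : E.Countable) (η : ℕ → ℕ → ℝ) (b : ℝ) :
    ∃ x < b, ∀ K i, x + η K i ∉ E := by
  have hc : (⋃ K, ⋃ i, (fun x => x + η K i) ⁻¹' E).Countable :=
    countable_iUnion fun K => countable_iUnion fun i =>
      hE.preimage_of_injOn (add_left_injective (η K i)).injOn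
  obtain ⟨x, hx, hxb⟩ := (hc.dense_compl ℝ).exists_lt b
  refine ⟨x, hxb, fun K i h => hx ?_⟩
  exact mem_iUnion.2 ⟨K, mem_iUnion.2 ⟨i, h⟩⟩

theorem exists_coarse_index {δ x₀ x : ℝ} (hδ : 0 < δ) (h : x₀ < x)
    (hne : ∀ a : ℕ, x₀ + a * δ ≠ x) : ∃ a : ℕ, x₀ + a * δ < x ∧ x < x₀ + (a + 1) * δ := by
  have h0 : 0 ≤ (x - x₀) / δ := div_nonneg (by linarith) hδ.le
  refine ⟨⌊(x - x₀) / δ⌋₊, lt_of_le_of_ne ?_ (hne _), ?_⟩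
  · have := (le_div_iff₀ hδ).1 (Nat.floor_le h0)
    linarith
  · have := (div_lt_iff₀ hδ).1 (Nat.lt_floor_add_one ((x - x₀) / δ))
    linarith

theorem coarse_lt {δ x₀ x : ℝ} {a b : ℕ} (hδ : 0 < δ) (h : x₀ + a * δ < x)
    (h' : x < x₀ + b * δ) : a < b := by
  have : (a : ℝ) * δ < b * δ := by linarith
  exact_mod_cast lt_of_mul_lt_mul_right this hδ.le

/-- A small scale `δ`: it is below the radii `ρ p` and below half of any coordinate gap of `S`. -/
theorem exists_scale {S : Set Pt} (hS : S.Finite) {ρ : Pt → ℝ} (hρ : ∀ p, 0 < ρ p) :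
    ∃ δ > 0, (∀ p ∈ S, δ < ρ p) ∧ (∀ p ∈ S, ∀ q ∈ S, p.1 ≠ q.1 → 2 * δ < |p.1 - q.1|) ∧
      ∀ p ∈ S, ∀ q ∈ S, p.2 ≠ q.2 → 2 * δ < |p.2 - q.2| := by
  have : Finite S := hS
  obtain ⟨δ₁, h1, h1'⟩ := exists_pos_forall_lt (ι := S) (r := fun p => ρ p) fun p => hρ p
  have gap : ∀ f : Pt → ℝ, ∃ δ > 0, ∀ p ∈ S, ∀ q ∈ S, f p ≠ f q → δ < |f p - f q| := by
    intro f
    obtain ⟨δ, h2, h2'⟩ := exists_pos_forall_lt (ι := {x : S × S // f x.1 ≠ f x.2})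
      (r := fun x => |f x.1.1 - f x.1.2|) fun x => abs_pos.2 (sub_ne_zero.2 x.2)
    exact ⟨δ, h2, fun p hp q hq hne => h2' ⟨(⟨p, hp⟩, ⟨q, hq⟩), hne⟩⟩
  obtain ⟨δ₂, h2, h2'⟩ := gap Prod.fst
  obtain ⟨δ₃, h3, h3'⟩ := gap Prod.snd
  have m1 := min_le_left δ₁ (min (δ₂ / 2) (δ₃ / 2))
  have m2 := (min_le_right δ₁ (min (δ₂ / 2) (δ₃ / 2))).trans (min_le_left _ _)
  have m3 := (min_le_right δ₁ (min (δ₂ / 2) (δ₃ / 2))).trans (min_le_right _ _)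
  refine ⟨min δ₁ (min (δ₂ / 2) (δ₃ / 2)), by positivity, fun p hp => m1.trans_lt (h1' ⟨p, hp⟩),
    fun p hp q hq hne => ?_, fun p hp q hq hne => ?_⟩
  · have := h2' p hp q hq hne; linarith
  · have := h3' p hp q hq hne; linarith

/-- The coarse indices of points whose coordinates are equal or far apart never differ by one. -/
theorem coarse_sep {δ x₀ x y : ℝ} {a b : ℕ} (hxy : x ≠ y → 2 * δ < |x - y|)
    (h1 : x₀ + a * δ < x) (h2 : x < x₀ + (a + 1) * δ) (h3 : x₀ + b * δ < y)
    (h4 : y < x₀ + (b + 1) * δ) : b ≠ a + 1 := by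
  rintro rfl
  push_cast at h3 h4
  have hlt : x < y := by linarith
  have := hxy hlt.ne
  rw [abs_sub_comm, abs_of_pos (sub_pos.2 hlt)] at this
  linarith

/-- Points in the same coarse interval have the same coordinate. -/
theorem coarse_unique {δ x₀ x y : ℝ} {a : ℕ} (hxy : x ≠ y → 2 * δ < |x - y|)
    (h1 : x₀ + a * δ < x) (h2 : x < x₀ + (a + 1) * δ) (h3 : x₀ + a * δ < y)
    (h4 : y < x₀ + (a + 1) * δ) : x = y := by
  by_contra hne
  have := hxy hne
  have : |x - y| < δ := abs_lt.2 ⟨by linarith, by linarith⟩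
  linarith

/-- The grid is chosen in the order coarse scale `δ`, shift `(x₀, y₀)`, refinement `K`: the blocks have
to be fixed before the Lebesgue number of the rest of the curves is known, so the shift is generic
for all scales `δ / K` at once. -/
theorem exists_adapted {V : Type} [Finite V] {R : V → ℝ → Pt} (hPL : ∀ v, IsPLCurve (R v))
    (hfin : (InPts R).Finite) :
    ∃ (D : BlockGrid) (S : Set Pt), SpecialPts R ⊆ S ∧ D.Adapted R S := by
  obtain ⟨S, hS, hspec, hSC, hreg⟩ := exists_regular hPL hfin
  choose ρ hρ hstar using exists_star hPL
  obtain ⟨δ, hδ, hδρ, hgap1, hgap2⟩ := exists_scale hS hρ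
  set C : Set Pt := ⋃ v, Im (R v) with hC
  have memC : ∀ {v z}, z ∈ Im (R v) → z ∈ C := fun h => mem_iUnion.2 ⟨_, h⟩
  have hCc : IsCompact C := isCompact_iUnion fun v => (hPL v).isCompact_im
  have hbad : ∀ f : Pt →ₗ[ℝ] ℝ, {c : ℝ | {z ∈ C | f z = c}.Infinite}.Finite := by
    intro f
    refine (finite_iUnion fun v => (hPL v).finite_infinite_fibres f).subset ?_
    intro c hc
    by_contra hnot
    simp only [mem_iUnion, mem_ofPred_eq, not_exists, not_infinite] at hnot
    refine hc ((finite_iUnion hnot).subset ?_)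
    rintro z ⟨hz, hz'⟩
    obtain ⟨v, hv⟩ := mem_iUnion.1 hz
    exact mem_iUnion.2 ⟨v, hv, hz'⟩
  obtain ⟨M, hM⟩ := isBounded_iff_forall_norm_le.1 hCc.isBounded
  have hM1 : ∀ z ∈ C, -M ≤ z.1 ∧ z.1 ≤ M := fun z hz => abs_le.1 ((norm_fst_le z).trans (hM z hz))
  have hM2 : ∀ z ∈ C, -M ≤ z.2 ∧ z.2 ≤ M := fun z hz => abs_le.1 ((norm_snd_le z).trans (hM z hz))
  -- the grid lines of all scales `δ / K` are generic
  obtain ⟨x₀, hx₀, hgx⟩ := exists_generic_shift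
    ((hbad (LinearMap.fst ℝ ℝ ℝ)).union (hS.image Prod.fst)).countable
    (fun K i => i * (δ / K)) (-M - δ)
  have hfx : ∀ K i : ℕ, {z ∈ C | z.1 = x₀ + i * (δ / K)}.Finite := fun K i => by
    by_contra h
    exact hgx K i (Or.inl h)
  obtain ⟨y₀, hy₀, hgy⟩ := exists_generic_shift
    (((hbad (LinearMap.snd ℝ ℝ ℝ)).union (hS.image Prod.snd)).countable.union
      (countable_iUnion fun K => countable_iUnion fun i => ((hfx K i).image Prod.snd).countable))
    (fun K i => i * (δ / K)) (-M - δ)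
  have hfy : ∀ K i : ℕ, {z ∈ C | z.2 = y₀ + i * (δ / K)}.Finite := fun K i => by
    by_contra h
    exact hgy K i (Or.inl (Or.inl h))
  have hSx : ∀ p ∈ S, ∀ K i : ℕ, p.1 ≠ x₀ + i * (δ / K) := fun p hp K i e =>
    hgx K i (Or.inr ⟨p, hp, e⟩)
  have hSy : ∀ p ∈ S, ∀ K i : ℕ, p.2 ≠ y₀ + i * (δ / K) := fun p hp K i e =>
    hgy K i (Or.inl (Or.inr ⟨p, hp, e⟩))
  have hvert : ∀ K i j : ℕ, (x₀ + i * (δ / K), y₀ + j * (δ / K)) ∉ C := fun K i j h =>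
    hgy K j (Or.inr (mem_iUnion.2 ⟨K, mem_iUnion.2 ⟨i, _, ⟨h, rfl⟩, rfl⟩⟩))
  have hSC' : ∀ p ∈ S, p ∈ C := fun p hp => mem_iUnion.2 (hSC p hp)
  -- the coarse indices of the points of `S`
  have hA : ∀ p : S, ∃ a : ℕ, x₀ + a * δ < p.1.1 ∧ p.1.1 < x₀ + (a + 1) * δ := fun p =>
    exists_coarse_index hδ (by have := hM1 _ (hSC' _ p.2); linarith)
      fun a e => hSx p p.2 1 a (by simp [e])
  have hB : ∀ p : S, ∃ a : ℕ, y₀ + a * δ < p.1.2 ∧ p.1.2 < y₀ + (a + 1) * δ := fun p =>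
    exists_coarse_index hδ (by have := hM2 _ (hSC' _ p.2); linarith)
      fun a e => hSy p p.2 1 a (by simp [e])
  choose A hA1 hA2 using hA
  choose B hB1 hB2 using hB
  obtain ⟨n, hn⟩ := exists_nat_gt (max 2 (max ((M + 2 * δ - x₀) / δ) ((M + 2 * δ - y₀) / δ)))
  obtain ⟨hn2, hn'⟩ := max_lt_iff.1 hn
  obtain ⟨hnx, hny⟩ := max_lt_iff.1 hn'
  rw [div_lt_iff₀ hδ] at hnx hny
  have hn2 : 2 < n := by exact_mod_cast hn2
  -- outside the open blocks the local pictures have a uniform size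
  let Q : S → Set Pt := fun p => Ioo (x₀ + A p * δ) (x₀ + (A p + 1) * δ) ×ˢ
    Ioo (y₀ + B p * δ) (y₀ + (B p + 1) * δ)
  have hQ : ∀ p, IsOpen (Q p) := fun p => isOpen_Ioo.prod isOpen_Ioo
  have hC' : IsCompact (C \ ⋃ p, Q p) := hCc.diff (isOpen_iUnion hQ)
  choose! r hr d hd hone hline hinf using hreg
  obtain ⟨ε, hε, hleb⟩ := lebesgue_number_lemma_of_metric (s := C \ ⋃ p, Q p)
    (c := fun q : {q : Pt // q ∉ S ∧ q ∈ C} => ball q.1 (r q.1)) hC' (fun _ => isOpen_ball) (by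
      rintro x ⟨hx, hxQ⟩
      have hxS : x ∉ S := fun h => hxQ (mem_iUnion.2 ⟨⟨x, h⟩,
        ⟨hA1 ⟨x, h⟩, hA2 ⟨x, h⟩⟩, ⟨hB1 ⟨x, h⟩, hB2 ⟨x, h⟩⟩⟩)
      exact mem_iUnion.2 ⟨⟨x, hxS, hx⟩, mem_ball_self (hr x hxS (mem_iUnion.1 hx))⟩)
  obtain ⟨K, hK⟩ := exists_nat_gt (max 4 (δ / ε))
  obtain ⟨hK4, hKε⟩ := max_lt_iff.1 hK
  have hK0 : (0 : ℝ) < K := by linarith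
  have hη : 0 < δ / K := div_pos hδ hK0
  have hηε : δ / K < ε := by
    rw [div_lt_iff₀ hε] at hKε
    rw [div_lt_iff₀ hK0]
    linarith
  have hmono : ∀ c : ℝ, StrictMono fun i : ℕ => c + i * (δ / K) := by
    intro c i j hij
    have : (i : ℝ) < j := by exact_mod_cast hij
    have := mul_lt_mul_of_pos_right this hη
    simp only
    linarith
  let D : BlockGrid :=
    { X := fun i => x₀ + i * (δ / K)
      Y := fun i => y₀ + i * (δ / K)
      hX := hmono x₀
      hY := hmono y₀
      K := K
      n := n
      B := range fun p : S => (A p, B p)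
      hK := by exact_mod_cast hK4.le
      hn := hn2.le
      hB := by
        rintro _ ⟨p, rfl⟩
        have b1 := hM1 _ (hSC' _ p.2)
        have b2 := hM2 _ (hSC' _ p.2)
        have c1 : 1 < A p + 1 := coarse_lt (x₀ := x₀) (x := p.1.1) hδ (by push_cast; linarith)
          (by push_cast; exact hA2 p)
        have c2 : 1 < B p + 1 := coarse_lt (x₀ := y₀) (x := p.1.2) hδ (by push_cast; linarith)
          (by push_cast; exact hB2 p)
        have c3 : A p < n - 2 := coarse_lt (x₀ := x₀) (x := p.1.1) hδ (hA1 p)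
          (by rw [Nat.cast_sub hn2.le]; push_cast; linarith)
        have c4 : B p < n - 2 := coarse_lt (x₀ := y₀) (x := p.1.2) hδ (hB1 p)
          (by rw [Nat.cast_sub hn2.le]; push_cast; linarith)
        simp only
        omega
      sep1 := by
        rintro _ ⟨p, rfl⟩ _ ⟨q, rfl⟩
        exact coarse_sep (hgap1 p p.2 q q.2) (hA1 p) (hA2 p) (hA1 q) (hA2 q)
      sep2 := by
        rintro _ ⟨p, rfl⟩ _ ⟨q, rfl⟩
        exact coarse_sep (hgap2 p p.2 q q.2) (hB1 p) (hB2 p) (hB1 q) (hB2 q) }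
  have coarse : ∀ (c : ℝ) (a : ℕ), c + ((a * K : ℕ) : ℝ) * (δ / K) = c + a * δ := by
    intro c a
    push_cast
    field_simp
  have hXc : ∀ a, D.X (a * D.K) = x₀ + a * δ := coarse x₀
  have hYc : ∀ a, D.Y (a * D.K) = y₀ + a * δ := coarse y₀
  have hXs : ∀ i, D.X (i + 1) = D.X i + δ / K := fun i => by
    simp only [D]; push_cast; ring
  have hYs : ∀ i, D.Y (i + 1) = D.Y i + δ / K := fun i => by
    simp only [D]; push_cast; ring
  have hQD : ∀ p, Q p = D.openBlock (A p) (B p) := fun p => by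
    simp only [BlockGrid.openBlock, hXc, hYc]
    push_cast
    rfl
  have hdist : ∀ {z w : Pt} {a b s e : ℝ}, a ≤ z.1 → z.1 ≤ a + e → a ≤ w.1 → w.1 ≤ a + e →
      b ≤ z.2 → z.2 ≤ b + e → b ≤ w.2 → w.2 ≤ b + e → e < s → dist z w < s := by
    intro z w a b s e h1 h2 h3 h4 h5 h6 h7 h8 he
    rw [Prod.dist_eq, max_lt_iff, Real.dist_eq, Real.dist_eq, abs_lt, abs_lt]
    exact ⟨⟨by linarith, by linarith⟩, by linarith, by linarith⟩
  -- closed fine cells do not meet the open blocks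
  have hfineQ : ∀ i j, D.IsFine i j → ∀ z ∈ D.cell i j, ∀ p, z ∉ Q p := by
    rintro i j ⟨-, -, hfB⟩ z ⟨⟨x1, x2⟩, ⟨y1, y2⟩⟩ p hz
    rw [hQD] at hz
    obtain ⟨⟨u1, u2⟩, ⟨v1, v2⟩⟩ := hz
    have a1 := D.hX.lt_iff_lt.1 (u1.trans_le x2)
    have a2 := D.hX.lt_iff_lt.1 (x1.trans_lt u2)
    have a3 := D.hY.lt_iff_lt.1 (v1.trans_le y2)
    have a4 := D.hY.lt_iff_lt.1 (y1.trans_lt v2)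
    refine hfB ⟨p, ?_⟩
    rw [Nat.div_eq_of_lt_le (Nat.lt_succ_iff.1 a1) a2, Nat.div_eq_of_lt_le (Nat.lt_succ_iff.1 a3) a4]
  have hfine : ∀ i j, D.IsFine i j → ∀ x ∈ C, x ∈ D.cell i j →
      ∃ q, q ∉ S ∧ q ∈ C ∧ ∀ z ∈ D.cell i j, dist z q < r q := by
    intro i j hf x hx hxc
    obtain ⟨⟨q, hqS, hqC⟩, hq⟩ := hleb x ⟨hx, fun h => by
      obtain ⟨p, hp⟩ := mem_iUnion.1 h
      exact hfineQ i j hf x hxc p hp⟩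
    refine ⟨q, hqS, hqC, fun z hz => mem_ball.1 (hq (mem_ball.2 ?_))⟩
    obtain ⟨⟨x1, x2⟩, ⟨y1, y2⟩⟩ := hxc
    obtain ⟨⟨x3, x4⟩, ⟨y3, y4⟩⟩ := hz
    rw [hXs] at x2 x4
    rw [hYs] at y2 y4
    exact hdist x3 x4 x1 x2 y3 y4 y1 y2 hηε
  refine ⟨D, S, hspec, ?_⟩
  constructor
  · intro v z hz
    have b1 := hM1 z (memC hz)
    have b2 := hM2 z (memC hz)
    have e1 : D.X D.N = x₀ + n * δ := hXc n
    have e2 : D.Y D.N = y₀ + n * δ := hYc n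
    have e3 : D.X 0 = x₀ := by simp [D]
    have e4 : D.Y 0 = y₀ := by simp [D]
    rw [e1, e2, e3, e4]
    refine ⟨?_, ?_, ?_, ?_⟩ <;> linarith
  · exact fun v i j h => hvert K i j (memC h)
  · exact hSC
  · exact fun p hp k => ⟨hSx p hp K k, hSy p hp K k⟩
  · exact fun i j hf p hp hc => hfineQ i j hf p hc ⟨p, hp⟩
      ⟨⟨hA1 ⟨p, hp⟩, hA2 ⟨p, hp⟩⟩, ⟨hB1 ⟨p, hp⟩, hB2 ⟨p, hp⟩⟩⟩
  · intro i j hf u v x hx y hy hxc hyc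
    obtain ⟨q, hqS, hqC, hq⟩ := hfine i j hf x (memC hx) hxc
    exact hone q hqS (mem_iUnion.1 hqC) u v x hx y hy (hq x hxc) (hq y hyc)
  · intro i j hf
    by_cases hne : ∃ x ∈ C, x ∈ D.cell i j
    · obtain ⟨x, hx, hxc⟩ := hne
      obtain ⟨q, hqS, hqC, hq⟩ := hfine i j hf x hx hxc
      have hqC' := mem_iUnion.1 hqC
      refine ⟨q, d q, hd q hqS hqC', ?_, ?_, fun v z hz hzc => hline q hqS hqC' v z hz (hq z hzc)⟩
      · intro h0 k e
        refine hinf q hqS hqC' (LinearMap.fst ℝ ℝ ℝ) h0 ?_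
        simp only [LinearMap.fst_apply, e]
        exact hfx K k
      · intro h0 k e
        refine hinf q hqS hqC' (LinearMap.snd ℝ ℝ ℝ) h0 ?_
        simp only [LinearMap.snd_apply, e]
        exact hfy K k
    · refine ⟨0, (1, 1), by simp, by simp, by simp, fun v z hz hzc => ?_⟩
      exact (hne ⟨z, memC hz, hzc⟩).elim
  · rintro a b ⟨p, hab⟩
    obtain ⟨rfl, rfl⟩ := Prod.mk.inj hab
    refine ⟨p, ?_, ?_, ?_⟩
    · rw [← hQD]
      exact ⟨⟨hA1 _, hA2 _⟩, ⟨hB1 _, hB2 _⟩⟩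
    · intro p' hp' hp'Q
      rw [← hQD] at hp'Q
      obtain ⟨⟨u1, u2⟩, ⟨v1, v2⟩⟩ := hp'Q
      exact Prod.ext (coarse_unique (hgap1 p' hp' p p.2) u1 u2 (hA1 p) (hA2 p))
        (coarse_unique (hgap2 p' hp' p p.2) v1 v2 (hB1 p) (hB2 p))
    · intro v
      obtain ⟨d₁, d₂, hd⟩ := hstar p.1 v
      refine ⟨d₁, d₂, fun x hx hxb => hd x hx ?_⟩
      obtain ⟨⟨x1, x2⟩, ⟨y1, y2⟩⟩ := hxb
      rw [hXc] at x1 x2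
      rw [hYc] at y1 y2
      push_cast at x2 y2
      have p1 := hA1 p
      have p2 := hA2 p
      have p3 := hB1 p
      have p4 := hB2 p
      exact hdist (e := δ) x1 (by linarith) p1.le (by linarith) y1 (by linarith) p3.le
        (by linarith) (hδρ p p.2)

/-- For every proper representation `R` of a graph `G` by simple
piecewise linear curves there is a plane graph `H` (drawn with horizontal and vertical
straight-line edges), a subdivision of a 3-connected planar graph, satisfying:
(P1) every internal (bounded) face of `H` is an open rectangle and the outer
(unbounded) face is disjoint from all curves of `R`;
(P2) no curve of `R` passes through a vertex of `H` and no edge of `H` passes through a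
special point of `R` (an endpoint, bend, or intersection point);
(P3) every face contains at most one special point, and no two faces containing special
points are adjacent (their closures share at most finitely many points);
(P4) every edge of `H` meets the curves of `R` in at most one point;
(P5) every face meets at most two curves of `R`, and if a face meets two curves then
those curves intersect inside it;
(P6) every curve of `R` meets the boundary of any single face at most twice. -/
theorem exists_refining_grid_graph {V : Type} [Fintype V] (G : SimpleGraph V)
    (R : V → ℝ → Pt) (hPL : ∀ v, IsPLCurve (R v)) (hrep : Represents G R)
    (hprop : IsProperRep R) :
    ∃ H : GridPlaneGraph,
      (∃ (N : ℕ) (G₀ : SimpleGraph (Fin N)), ThreeConnected G₀ ∧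
        IsSubdivisionOf H.graph G₀) ∧
      -- P1
      (∀ F : Set Pt, H.IsFace F → Bornology.IsBounded F →
        ∃ x₁ x₂ y₁ y₂ : ℝ, F = Ioo x₁ x₂ ×ˢ Ioo y₁ y₂) ∧
      (∀ F : Set Pt, H.IsFace F → ¬ Bornology.IsBounded F →
        ∀ v : V, F ∩ Im (R v) = ∅) ∧
      -- P2
      (∀ x ∈ H.verts, ∀ v : V, x ∉ Im (R v)) ∧
      (∀ e ∈ H.edges, ∀ z ∈ SpecialPts R, z ∉ segment ℝ e.1 e.2) ∧
      -- P3
      (∀ F : Set Pt, H.IsFace F → (F ∩ SpecialPts R).Subsingleton) ∧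
      (∀ F₁ F₂ : Set Pt, H.IsFace F₁ → H.IsFace F₂ → F₁ ≠ F₂ →
        (F₁ ∩ SpecialPts R).Nonempty → (F₂ ∩ SpecialPts R).Nonempty →
        (closure F₁ ∩ closure F₂).Finite) ∧
      -- P4
      (∀ e ∈ H.edges, (segment ℝ e.1 e.2 ∩ ⋃ v : V, Im (R v)).Subsingleton) ∧
      -- P5
      (∀ F : Set Pt, H.IsFace F → ∀ u v w : V, u ≠ v → u ≠ w → v ≠ w →
        ¬((F ∩ Im (R u)).Nonempty ∧ (F ∩ Im (R v)).Nonempty ∧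
          (F ∩ Im (R w)).Nonempty)) ∧
      (∀ F : Set Pt, H.IsFace F → ∀ u v : V, u ≠ v →
        (F ∩ Im (R u)).Nonempty → (F ∩ Im (R v)).Nonempty →
        (F ∩ Im (R u) ∩ Im (R v)).Nonempty) ∧
      -- P6
      (∀ F : Set Pt, H.IsFace F → ∀ v : V, ∀ x y z : Pt,
        x ∈ Im (R v) ∩ frontier F → y ∈ Im (R v) ∩ frontier F →
        z ∈ Im (R v) ∩ frontier F → x = y ∨ x = z ∨ y = z) := by
  obtain ⟨D, S, hS, h⟩ := exists_adapted hPL hprop.1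
  have hsub : ∀ F : Set Pt, F ∩ SpecialPts R ⊆ F ∩ S := fun F => inter_subset_inter_right F hS
  refine ⟨D.graph, D.exists_subdivision, ?_, fun F hF hb v => h.unbounded_face hF hb v, ?_, ?_,
    ?_, ?_, fun e he => h.edge_subsingleton he, ?_, ?_,
    fun F hF v x y z hx hy hz => h.boundary_le_two hF v hx hy hz⟩
  · intro F hF hb
    rcases BlockGrid.face_cases hF with ⟨i₁, i₂, j₁, j₂, -, rfl⟩ | h'
    · exact ⟨_, _, _, _, rfl⟩
    · exact (h'.2 hb).elim
  · intro x hx v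
    obtain ⟨i, j, -, -, -, rfl⟩ := D.mem_verts.1 hx
    exact h.vert v i j
  · intro e he z hz hze
    obtain ⟨i, j, -, -, ⟨k, hk⟩ | ⟨k, hk⟩⟩ := BlockGrid.edge_in_fine he
    · exact (h.offLines z (hS hz) k).1 (hk z hze)
    · exact (h.offLines z (hS hz) k).2 (hk z hze)
  · intro F hF x hx y hy
    obtain ⟨a, b, hab, rfl⟩ := h.special_face hF ⟨x, hsub _ hx⟩
    obtain ⟨p, -, hp, -⟩ := h.block a b hab
    rw [hp x (hS hx.2) hx.1, hp y (hS hy.2) hy.1]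
  · intro F₁ F₂ hF₁ hF₂ hne h₁ h₂
    rw [h.special_closures hF₁ hF₂ hne (h₁.mono (hsub _)) (h₂.mono (hsub _))]
    exact finite_empty
  · rintro F hF u v w huv huw hvw ⟨hu, hv, hw⟩
    rcases h.face_two_curves hF with h' | ⟨p, -, hp⟩
    · exact huv (h' u v hu hv)
    · exact hprop.2.1 p u v w huv huw hvw ⟨hp u hu, hp v hv, hp w hw⟩
  · intro F hF u v huv hu hv
    rcases h.face_two_curves hF with h' | ⟨p, hpF, hp⟩
    · exact (huv (h' u v hu hv)).elim
    · exact ⟨p, ⟨hpF, hp u hu⟩, hp v hv⟩
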